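/- For every integer N ≥ 2, every real p > 1, all positive reals f, F with f^p ≤ F, and every κ ∈ (0,1], the quantity D_p(F,f,κ) := inf { sup_{E measurable, μ(E)=κ} ∫_E (M_N φ)^p dμ : φ ≥ 0 measurable on [0,1), ∫ φ dμ = f, ∫ φ^p dμ = F } equals min { κ·u^p + ((N^p − 1)/(N^p − N))·(F − u^{p−1} f) : f ≤ u ≤ min((F/f)^{1/(p−1)}, f/κ) }. -/

import Mathlib

open MeasureTheory Set Filter

/-- The `N`-adic interval `[k/N^m, (k+1)/N^m)` at level `m`. -/
def adicItv (N m k : ℕ) : Set ℝ :=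
  Set.Ico ((k : ℝ) / (N : ℝ) ^ m) (((k : ℝ) + 1) / (N : ℝ) ^ m)

/-- The average `(1/μ(I)) ∫_I |φ| dμ` of `φ` over the `N`-adic interval at level `m`, index `k`
(its measure is `N^{-m}`). -/
noncomputable def adicAvg (N : ℕ) (φ : ℝ → ℝ) (m k : ℕ) : ℝ :=
  (N : ℝ) ^ m * ∫ y in adicItv N m k, |φ y|

/-- The `N`-adic maximal operator on `[0,1)`:
`M_N φ(x) = sup { (1/μ(I)) ∫_I |φ| dμ : x ∈ I, I an N-adic interval }`. -/
noncomputable def adicMax (N : ℕ) (φ : ℝ → ℝ) (x : ℝ) : ℝ :=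
  sSup {r : ℝ | ∃ m k : ℕ, k < N ^ m ∧ x ∈ adicItv N m k ∧ r = adicAvg N φ m k}

/-- `sup { ∫_E (M_N φ)^p dμ : E ⊆ [0,1) measurable, μ(E) = κ }`. -/
noncomputable def supMeas (N : ℕ) (p κ : ℝ) (φ : ℝ → ℝ) : ℝ :=
  sSup {z : ℝ | ∃ E : Set ℝ, MeasurableSet E ∧ E ⊆ Set.Ico (0:ℝ) 1 ∧
    volume E = ENNReal.ofReal κ ∧ z = ∫ x in E, adicMax N φ x ^ p}

/-- The Bellman function `D_p(F,f,κ)`: the infimum of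
`sup { ∫_E (M_N φ)^p dμ : μ(E) = κ }` over all nonnegative measurable `φ` on `[0,1)`
with `∫ φ dμ = f` and `∫ φ^p dμ = F`. -/
noncomputable def Dp (N : ℕ) (p F f κ : ℝ) : ℝ :=
  sInf {y : ℝ | ∃ φ : ℝ → ℝ, Measurable φ ∧ (∀ x ∈ Set.Ico (0:ℝ) 1, 0 ≤ φ x) ∧
    (∫ x in Set.Ico (0:ℝ) 1, φ x) = f ∧ (∫ x in Set.Ico (0:ℝ) 1, φ x ^ p) = F ∧
    y = supMeas N p κ φ}

noncomputable abbrev nuI : Measure ℝ := volume.restrict (Set.Ico (0:ℝ) 1)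

instance nuI_prob : IsProbabilityMeasure nuI := ⟨by simp [nuI]⟩

noncomputable def ea (N : ℕ) (φ : ℝ → ℝ) (n : ℕ) (x : ℝ) : ℝ :=
  adicAvg N φ n ⌊x * (N:ℝ) ^ n⌋₊

lemma powN_pos {N : ℕ} (hN : 2 ≤ N) (n : ℕ) : (0:ℝ) < (N:ℝ) ^ n := by
  have : (0:ℝ) < N := by exact_mod_cast (by omega : 0 < N)
  positivity

lemma mem_adicItv {N : ℕ} (hN : 2 ≤ N) {x : ℝ} (hx : 0 ≤ x) (m k : ℕ) :
    x ∈ adicItv N m k ↔ k = ⌊x * (N:ℝ) ^ m⌋₊ := by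
  have h := powN_pos hN m
  rw [eq_comm, Nat.floor_eq_iff (by positivity), adicItv, Set.mem_Ico, div_le_iff₀ h,
    lt_div_iff₀ h]

lemma floor_lt {N : ℕ} (hN : 2 ≤ N) {x : ℝ} (hx : x ∈ Set.Ico (0:ℝ) 1) (m : ℕ) :
    ⌊x * (N:ℝ) ^ m⌋₊ < N ^ m := by
  have h := powN_pos hN m
  rw [Nat.floor_lt (by have := hx.1; positivity)]
  push_cast
  nlinarith [hx.2]

lemma adicMax_eq {N : ℕ} (hN : 2 ≤ N) (φ : ℝ → ℝ) {x : ℝ} (hx : x ∈ Set.Ico (0:ℝ) 1) :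
    adicMax N φ x = ⨆ n, ea N φ n x := by
  unfold adicMax iSup
  congr 1
  ext r
  simp only [Set.mem_ofPred_eq, Set.mem_range]
  constructor
  · rintro ⟨m, k, hk, hxk, rfl⟩
    refine ⟨m, ?_⟩
    rw [mem_adicItv hN hx.1] at hxk
    rw [ea, ← hxk]
  · rintro ⟨m, rfl⟩
    exact ⟨m, _, floor_lt hN hx m, (mem_adicItv hN hx.1 _ _).2 rfl, rfl⟩

/-- functions constant on level `n` intervals -/
def Lev (N n : ℕ) (h : ℝ → ℝ) : Prop := ∃ g : ℕ → ℝ, ∀ x, h x = g ⌊x * (N:ℝ) ^ n⌋₊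

lemma Lev.succ {N n : ℕ} (hN : 2 ≤ N) {h : ℝ → ℝ} (hh : Lev N n h) : Lev N (n+1) h := by
  obtain ⟨g, hg⟩ := hh
  refine ⟨fun k => g (k / N), fun x => ?_⟩
  have : (N:ℝ) ≠ 0 := by positivity
  show h x = g (⌊x * (N:ℝ) ^ (n+1)⌋₊ / N)
  rw [hg, ← Nat.floor_div_natCast]
  congr 2
  field_simp
  try ring

lemma Lev.meas {N n : ℕ} {h : ℝ → ℝ} (hh : Lev N n h) : Measurable h := by
  obtain ⟨g, hg⟩ := hh
  rw [funext hg]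
  have : Measurable g := measurable_from_top
  exact this.comp (Nat.measurable_floor.comp (by fun_prop))

lemma Lev.map {N n : ℕ} {h : ℝ → ℝ} (hh : Lev N n h) (F : ℝ → ℝ) : Lev N n (fun x => F (h x)) := by
  obtain ⟨g, hg⟩ := hh
  exact ⟨fun k => F (g k), fun x => by simp only [hg]⟩

lemma Lev.map2 {N n : ℕ} {h h' : ℝ → ℝ} (hh : Lev N n h) (hh' : Lev N n h') (F : ℝ → ℝ → ℝ) :
    Lev N n (fun x => F (h x) (h' x)) := by
  obtain ⟨g, hg⟩ := hh
  obtain ⟨g', hg'⟩ := hh'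
  exact ⟨fun k => F (g k) (g' k), fun x => by simp only [hg, hg']⟩

lemma Lev.bdd {N n : ℕ} (hN : 2 ≤ N) {h : ℝ → ℝ} (hh : Lev N n h) :
    ∃ B : ℝ, ∀ x ∈ Set.Ico (0:ℝ) 1, |h x| ≤ B := by
  obtain ⟨g, hg⟩ := hh
  refine ⟨∑ k ∈ Finset.range (N^n), |g k|, fun x hx => ?_⟩
  rw [hg]
  exact Finset.single_le_sum (f := fun k => |g k|) (fun _ _ => abs_nonneg _)
    (Finset.mem_range.2 (floor_lt hN hx n))

lemma ae_nuI {P : ℝ → Prop} (h : ∀ x ∈ Set.Ico (0:ℝ) 1, P x) : ∀ᵐ x ∂nuI, P x := by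
  rw [ae_restrict_iff' measurableSet_Ico]
  exact Eventually.of_forall h

lemma Lev.integrable_mul {N n : ℕ} (hN : 2 ≤ N) {h φ : ℝ → ℝ} (hh : Lev N n h)
    (hφ : Integrable φ nuI) : Integrable (fun x => h x * φ x) nuI := by
  obtain ⟨B, hB⟩ := hh.bdd hN
  exact hφ.bdd_mul hh.meas.aestronglyMeasurable (ae_nuI hB)

lemma Lev.integrable {N n : ℕ} (hN : 2 ≤ N) {h : ℝ → ℝ} (hh : Lev N n h) :
    Integrable h nuI := by
  simpa using hh.integrable_mul hN (integrable_const (1:ℝ))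

lemma ea_lev (N : ℕ) (φ : ℝ → ℝ) (n : ℕ) : Lev N n (ea N φ n) := ⟨_, fun _ => rfl⟩

lemma ea_nonneg (N : ℕ) (φ : ℝ → ℝ) (n : ℕ) (x : ℝ) : 0 ≤ ea N φ n x := by
  unfold ea adicAvg
  have : 0 ≤ ∫ y in adicItv N n ⌊x * (N:ℝ) ^ n⌋₊, |φ y| := integral_nonneg fun _ => abs_nonneg _
  positivity

lemma adicItv_vol {N : ℕ} (hN : 2 ≤ N) (m k : ℕ) :
    volume (adicItv N m k) = ENNReal.ofReal (1 / (N:ℝ)^m) := by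
  rw [adicItv, Real.volume_Ico]; congr 1; ring

lemma adicItv_sub {N : ℕ} (hN : 2 ≤ N) {m k : ℕ} (hk : k < N ^ m) :
    adicItv N m k ⊆ Set.Ico 0 1 := by
  have h := powN_pos hN m
  intro x hx
  refine ⟨le_trans (by positivity) hx.1, lt_of_lt_of_le hx.2 ?_⟩
  rw [div_le_one h]
  exact_mod_cast hk

lemma Ico_eq_iUnion {N : ℕ} (hN : 2 ≤ N) (m : ℕ) :
    Set.Ico (0:ℝ) 1 = ⋃ k ∈ Finset.range (N^m), adicItv N m k := by
  ext x
  simp only [Set.mem_iUnion, Finset.mem_range, exists_prop]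
  constructor
  · intro hx
    exact ⟨_, floor_lt hN hx m, (mem_adicItv hN hx.1 _ _).2 rfl⟩
  · rintro ⟨k, hk, hx⟩
    exact adicItv_sub hN hk hx

lemma integral_split {N : ℕ} (hN : 2 ≤ N) (m : ℕ) {h : ℝ → ℝ} (hh : Integrable h nuI) :
    ∫ x, h x ∂nuI = ∑ k ∈ Finset.range (N^m), ∫ x in adicItv N m k, h x := by
  rw [nuI]
  have := integral_biUnion_finset (μ := volume) (f := h) (Finset.range (N^m))
    (s := fun k => adicItv N m k) (fun _ _ => measurableSet_Ico) ?_ ?_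
  · rw [← this, ← Ico_eq_iUnion hN m]
  · intro i hi j hj hij
    refine Set.disjoint_left.2 fun x hx hx' => hij ?_
    have h0 : 0 ≤ x := (adicItv_sub hN (Finset.mem_range.1 hi) hx).1
    rw [mem_adicItv hN h0] at hx hx'
    rw [hx, hx']
  · intro i hi
    exact hh.mono_measure (Measure.restrict_mono (adicItv_sub hN (Finset.mem_range.1 hi)) le_rfl)

lemma key {N : ℕ} (hN : 2 ≤ N) {n : ℕ} {h φ : ℝ → ℝ} (hh : Lev N n h) (hφ : Integrable φ nuI) :
    ∫ x, h x * ea N φ n x ∂nuI = ∫ x, h x * |φ x| ∂nuI := by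
  have h1 : Integrable (fun x => h x * ea N φ n x) nuI :=
    hh.integrable_mul hN ((ea_lev N φ n).integrable hN)
  have h2 : Integrable (fun x => h x * |φ x|) nuI := hh.integrable_mul hN hφ.abs
  rw [integral_split hN n h1, integral_split hN n h2]
  refine Finset.sum_congr rfl fun k hk => ?_
  obtain ⟨g, hg⟩ := hh
  have hfl : ∀ x ∈ adicItv N n k, ⌊x * (N:ℝ)^n⌋₊ = k := fun x hx =>
    ((mem_adicItv hN (adicItv_sub hN (Finset.mem_range.1 hk) hx).1 _ _).1 hx).symm
  have e1 : ∫ x in adicItv N n k, h x * ea N φ n x = ∫ x in adicItv N n k, g k * adicAvg N φ n k :=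
    setIntegral_congr_fun measurableSet_Ico fun x hx => by simp only [hg, ea, hfl x hx]
  have e2 : ∫ x in adicItv N n k, h x * |φ x| = ∫ x in adicItv N n k, g k * |φ x| :=
    setIntegral_congr_fun measurableSet_Ico fun x hx => by simp only [hg, hfl x hx]
  have hp := powN_pos hN n
  rw [e1, e2, setIntegral_const, integral_const_mul, Measure.real, adicItv_vol hN,
    ENNReal.toReal_ofReal (by positivity), adicAvg, smul_eq_mul]
  field_simp

lemma ea_succ_le {N : ℕ} (hN : 2 ≤ N) {φ : ℝ → ℝ} (hφ : Integrable φ nuI) (n : ℕ) {x : ℝ}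
    (hx : x ∈ Set.Ico (0:ℝ) 1) : ea N φ (n+1) x ≤ N * ea N φ n x := by
  unfold ea adicAvg
  have h0 : (N:ℝ) ≠ 0 := by positivity
  have hsub : adicItv N (n+1) ⌊x * (N:ℝ) ^ (n+1)⌋₊ ⊆ adicItv N n ⌊x * (N:ℝ) ^ n⌋₊ := by
    intro y hy
    have hy0 := (adicItv_sub hN (floor_lt hN hx (n+1)) hy).1
    rw [mem_adicItv hN hy0] at hy ⊢
    have e : ∀ z : ℝ, z * (N:ℝ)^n = z * (N:ℝ)^(n+1) / N := fun z => by field_simp; try ring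
    rw [e, e, Nat.floor_div_natCast, Nat.floor_div_natCast, hy]
  have : ∫ y in adicItv N (n+1) ⌊x * (N:ℝ) ^ (n+1)⌋₊, |φ y| ≤
      ∫ y in adicItv N n ⌊x * (N:ℝ) ^ n⌋₊, |φ y| :=
    setIntegral_mono_set
      (hφ.abs.mono_measure (Measure.restrict_mono (adicItv_sub hN (floor_lt hN hx n)) le_rfl))
      (Eventually.of_forall fun _ => abs_nonneg _) hsub.eventuallyLE
  have hp := powN_pos hN (n+1)
  calc _ ≤ (N:ℝ)^(n+1) * ∫ y in adicItv N n ⌊x * (N:ℝ) ^ n⌋₊, |φ y| := by gcongr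
    _ = _ := by rw [pow_succ]; ring

lemma ea_zero (N : ℕ) (φ : ℝ → ℝ) {x : ℝ} (hx : x ∈ Set.Ico (0:ℝ) 1) :
    ea N φ 0 x = ∫ y, |φ y| ∂nuI := by
  have : ⌊x⌋₊ = 0 := Nat.floor_eq_zero.2 hx.2
  simp [ea, adicAvg, adicItv, this]

lemma adicMax_meas {N : ℕ} (hN : 2 ≤ N) (φ : ℝ → ℝ) : AEMeasurable (adicMax N φ) nuI := by
  refine ⟨fun x => ⨆ n, ea N φ n x, Measurable.iSup fun n => (ea_lev N φ n).meas, ?_⟩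
  exact ae_nuI fun x hx => adicMax_eq hN φ hx

/-- Lebesgue differentiation -/
lemma ea_tendsto {N : ℕ} (hN : 2 ≤ N) {φ : ℝ → ℝ} (hφ : Integrable φ nuI) :
    ∀ᵐ x ∂nuI, Tendsto (fun n => ea N φ n x) atTop (nhds |φ x|) := by
  have hint : Integrable ((Set.Ico (0:ℝ) 1).indicator fun x => |φ x|) volume :=
    (integrable_indicator_iff measurableSet_Ico).2 hφ.abs
  have := IsUnifLocDoublingMeasure.ae_tendsto_average (μ := volume) hint.locallyIntegrable 1
  filter_upwards [ae_restrict_of_ae this, ae_restrict_mem measurableSet_Ico] with x hx hxI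
  have hp := fun n => powN_pos hN n
  have hN1 : (1:ℝ) < N := by exact_mod_cast (by omega : 1 < N)
  have := hx (ι := ℕ) (l := atTop) (fun n => ((⌊x * (N:ℝ)^n⌋₊:ℝ) + 1/2) / (N:ℝ)^n)
    (fun n => (1/2) * ((N:ℝ)⁻¹)^n) ?_ ?_
  · rw [Set.indicator_of_mem hxI] at this
    refine this.congr fun n => ?_
    set k := ⌊x * (N:ℝ)^n⌋₊ with hk
    have hball : Metric.closedBall (((k:ℝ) + 1/2) / (N:ℝ)^n) ((1/2) * ((N:ℝ)⁻¹)^n) =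
        Set.Icc ((k : ℝ) / (N : ℝ) ^ n) (((k : ℝ) + 1) / (N : ℝ) ^ n) := by
      rw [Real.closedBall_eq_Icc]
      congr 1 <;> (rw [inv_pow]; field_simp; try ring)
    have hpn := hp n
    rw [hball, setAverage_eq, integral_Icc_eq_integral_Ico, Measure.real, Real.volume_Icc, ea,
      adicAvg, ← hk, adicItv]
    have : ((k : ℝ) + 1) / (N : ℝ) ^ n - (k : ℝ) / (N : ℝ) ^ n = ((N:ℝ)^n)⁻¹ := by
      field_simp; ring
    rw [this, ENNReal.toReal_ofReal (by positivity), inv_inv, smul_eq_mul]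
    congr 1
    refine setIntegral_congr_fun measurableSet_Ico fun y hy => ?_
    exact Set.indicator_of_mem (adicItv_sub hN (floor_lt hN hxI n) hy) _
  · rw [tendsto_nhdsWithin_iff]
    constructor
    · rw [show (0:ℝ) = (1/2) * 0 by ring]
      exact (tendsto_pow_atTop_nhds_zero_of_lt_one (by positivity)
        (inv_lt_one_of_one_lt₀ hN1)).const_mul _
    · refine Eventually.of_forall fun n => ?_
      have : (0:ℝ) < N := by linarith
      simp only [Set.mem_Ioi]; positivity
  · refine Eventually.of_forall fun n => ?_
    have hm := (mem_adicItv hN hxI.1 n _).2 rfl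
    have hpn := hp n
    rw [Real.closedBall_eq_Icc]
    unfold adicItv at hm
    have e1 : ((N:ℝ)⁻¹)^n = 1 / (N:ℝ)^n := by rw [inv_pow]; ring
    rw [add_div] at hm
    rw [add_div, e1]
    constructor
    · have := hm.1
      ring_nf at this ⊢; linarith
    · have := hm.2
      ring_nf at this ⊢; linarith

noncomputable def cN (N : ℕ) (p : ℝ) : ℝ := ((N : ℝ) ^ p - 1) / ((N : ℝ) ^ p - N)

lemma Np_gt {N : ℕ} (hN : 2 ≤ N) {p : ℝ} (hp : 1 < p) : (N:ℝ) < (N:ℝ)^p := by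
  have hN1 : (1:ℝ) < N := by exact_mod_cast (by omega : 1 < N)
  calc (N:ℝ) = (N:ℝ)^(1:ℝ) := (Real.rpow_one _).symm
    _ < _ := Real.rpow_lt_rpow_of_exponent_lt hN1 hp

lemma cN_pos {N : ℕ} (hN : 2 ≤ N) {p : ℝ} (hp : 1 < p) : 0 < cN N p := by
  have := Np_gt hN hp
  have hN1 : (1:ℝ) < N := by exact_mod_cast (by omega : 1 < N)
  exact div_pos (by linarith) (by linarith)

lemma rpow_sub_one_mul {p m : ℝ} (hm : 0 ≤ m) (hp : 1 < p) : m ^ (p-1) * m = m ^ p := by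
  rcases hm.eq_or_lt with rfl | h
  · rw [Real.zero_rpow (by linarith), Real.zero_rpow (by linarith)]; simp
  · rw [Real.rpow_sub_one h.ne']; field_simp

lemma scal_C {N : ℕ} (hN : 2 ≤ N) {p : ℝ} (hp : 1 < p) {m y : ℝ} (hm : 0 < m)
    (hyN : y ≤ N * m) :
    m ^ p - cN N p * (m ^ (p-1) * y) ≤ (max m y) ^ p - cN N p * ((max m y)^(p-1) * y) := by
  rcases le_or_gt y m with h | h
  · rw [max_eq_left h]
  rw [max_eq_right h.le, rpow_sub_one_mul (by linarith) hp]
  have hN1 : (1:ℝ) < N := by exact_mod_cast (by omega : 1 < N)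
  have hNp := Np_gt hN hp
  set t := y / m with ht
  have hy : y = t * m := by rw [ht]; field_simp
  have ht1 : 1 ≤ t := by rw [ht, le_div_iff₀ hm]; linarith
  have htN : t ≤ N := by rw [ht, div_le_iff₀ hm]; linarith
  -- chord
  have hch : t ^ p ≤ ((N - t) / (N - 1)) * 1 + ((t - 1)/(N-1)) * (N:ℝ)^p := by
    have hc := (convexOn_rpow hp.le).2 (show (1:ℝ) ∈ Set.Ici 0 by simp)
      (show (N:ℝ) ∈ Set.Ici 0 by simp)
      (show 0 ≤ ((N:ℝ) - t) / (N - 1) from div_nonneg (by linarith) (by linarith))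
      (show 0 ≤ (t - 1)/((N:ℝ)-1) from div_nonneg (by linarith) (by linarith))
      (by rw [← add_div]; rw [div_eq_one_iff_eq (by linarith)]; ring)
    simp only [smul_eq_mul, Real.one_rpow] at hc
    have h1 : (N:ℝ) - 1 ≠ 0 := by linarith
    have h2 : ((N:ℝ) - t) / (N - 1) * 1 + (t - 1)/((N:ℝ)-1) * N = t := by
      field_simp; ring
    rwa [h2] at hc
  have hkey : (cN N p - 1) * t ^ p + 1 ≤ cN N p * t := by
    have hC1 : cN N p - 1 = (N - 1) / ((N:ℝ)^p - N) := by
      unfold cN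
      have : (N:ℝ)^p - N ≠ 0 := by linarith
      field_simp; ring
    have h0 : 0 ≤ cN N p - 1 := by rw [hC1]; exact div_nonneg (by linarith) (by linarith)
    have := mul_le_mul_of_nonneg_left hch h0
    refine le_trans (add_le_add_left this 1) (le_of_eq ?_)
    rw [hC1]; unfold cN
    have h1 : (N:ℝ)^p - N ≠ 0 := by linarith
    have h2 : (N:ℝ) - 1 ≠ 0 := by linarith
    field_simp; ring
  have hmp : 0 < m ^ p := Real.rpow_pos_of_pos hm p
  rw [hy, Real.mul_rpow (by linarith) hm.le,
    show m ^ (p-1) * (t * m) = t * (m^(p-1) * m) by ring, rpow_sub_one_mul hm.le hp]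
  nlinarith

lemma scal_q {p : ℝ} (hp : 1 < p) {m y : ℝ} (hm : 0 < m) :
    (p-1) * (max m y) ^ p - p * ((max m y)^(p-1) * y) ≤ (p-1) * m ^ p - p * (m ^ (p-1) * y) := by
  rcases le_or_gt y m with h | h
  · rw [max_eq_left h]
  rw [max_eq_right h.le, rpow_sub_one_mul (by linarith) hp]
  set t := y / m with ht
  have hy : y = t * m := by rw [ht]; field_simp
  have ht1 : 1 ≤ t := by rw [ht, le_div_iff₀ hm]; linarith
  have hb := one_add_mul_self_le_rpow_one_add (s := t - 1) (by linarith) hp.le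
  rw [show 1 + (t - 1) = t by ring] at hb
  have hmp : 0 < m ^ p := Real.rpow_pos_of_pos hm p
  rw [hy, Real.mul_rpow (by linarith) hm.le,
    show m ^ (p-1) * (t * m) = t * (m^(p-1) * m) by ring, rpow_sub_one_mul hm.le hp]
  nlinarith

/-- running maximum started from `u` -/
noncomputable def mm (N : ℕ) (φ : ℝ → ℝ) (u : ℝ) : ℕ → ℝ → ℝ
  | 0 => fun _ => u
  | n+1 => fun x => max (mm N φ u n x) (ea N φ (n+1) x)

lemma mm_lev {N : ℕ} (hN : 2 ≤ N) (φ : ℝ → ℝ) (u : ℝ) (n : ℕ) : Lev N n (mm N φ u n) := by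
  induction n with
  | zero => exact ⟨fun _ => u, fun _ => rfl⟩
  | succ n ih => exact (ih.succ hN).map2 (ea_lev N φ (n+1)) max

lemma le_mm (N : ℕ) (φ : ℝ → ℝ) (u : ℝ) (n : ℕ) (x : ℝ) : u ≤ mm N φ u n x := by
  induction n with
  | zero => exact le_rfl
  | succ n ih => exact ih.trans (le_max_left _ _)

lemma mm_mono (N : ℕ) (φ : ℝ → ℝ) (u : ℝ) (x : ℝ) : Monotone fun n => mm N φ u n x :=
  monotone_nat_of_le_succ fun _ => le_max_left _ _

lemma ea_le_mm (N : ℕ) {φ : ℝ → ℝ} {u : ℝ} (hu : ∫ y, |φ y| ∂nuI ≤ u) {x : ℝ}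
    (hx : x ∈ Set.Ico (0:ℝ) 1) (n : ℕ) : ea N φ n x ≤ mm N φ u n x := by
  cases n with
  | zero => rw [ea_zero N φ hx]; exact hu
  | succ n => exact le_max_right _ _

/-- the two monotonicity facts -/
lemma step_C {N : ℕ} (hN : 2 ≤ N) {p : ℝ} (hp : 1 < p) {φ : ℝ → ℝ} (hφ : Integrable φ nuI)
    {u : ℝ} (hu0 : 0 < u) (hu : ∫ y, |φ y| ∂nuI ≤ u) (n : ℕ) :
    u ^ p - cN N p * (u^(p-1) * ∫ y, |φ y| ∂nuI) ≤
    ∫ x, mm N φ u n x ^ p ∂nuI - cN N p * ∫ x, mm N φ u n x ^ (p-1) * |φ x| ∂nuI := by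
  induction n with
  | zero => simp [mm, integral_const_mul]
  | succ n ih =>
    refine ih.trans ?_
    have L := mm_lev hN φ u n
    have L' := mm_lev hN φ u (n+1)
    have L1 := (L.map (fun t => t ^ (p-1))).succ hN
    have L2 := (L'.map (fun t => t ^ (p-1)))
    have L3 := (L.map (fun t => t ^ p))
    have L4 := (L'.map (fun t => t ^ p))
    rw [← key hN L1 hφ, ← key hN L2 hφ, ← integral_const_mul, ← integral_const_mul,
      ← integral_sub (L3.integrable hN)
        ((L1.integrable_mul hN ((ea_lev N φ (n+1)).integrable hN)).const_mul _),
      ← integral_sub (L4.integrable hN)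
        ((L2.integrable_mul hN ((ea_lev N φ (n+1)).integrable hN)).const_mul _)]
    refine integral_mono_ae ((L3.integrable hN).sub
        ((L1.integrable_mul hN ((ea_lev N φ (n+1)).integrable hN)).const_mul _))
      ((L4.integrable hN).sub
        ((L2.integrable_mul hN ((ea_lev N φ (n+1)).integrable hN)).const_mul _))
      (ae_nuI fun x hx => ?_)
    have hle := le_mm N φ u n x
    refine scal_C hN hp (by linarith) ((ea_succ_le hN hφ n hx).trans ?_)
    have := ea_le_mm N hu hx n
    gcongr

lemma step_q {N : ℕ} (hN : 2 ≤ N) {p : ℝ} (hp : 1 < p) {φ : ℝ → ℝ} (hφ : Integrable φ nuI)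
    {u : ℝ} (hu0 : 0 < u) (n : ℕ) :
    (p-1) * ∫ x, mm N φ u n x ^ p ∂nuI - p * ∫ x, mm N φ u n x ^ (p-1) * |φ x| ∂nuI ≤
    (p-1) * u ^ p := by
  induction n with
  | zero =>
    have : 0 ≤ ∫ y, |φ y| ∂nuI := integral_nonneg fun _ => abs_nonneg _
    simp [mm, integral_const_mul]
    positivity
  | succ n ih =>
    refine le_trans ?_ ih
    have L := mm_lev hN φ u n
    have L' := mm_lev hN φ u (n+1)
    have L1 := (L.map (fun t => t ^ (p-1))).succ hN
    have L2 := (L'.map (fun t => t ^ (p-1)))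
    have L3 := (L.map (fun t => t ^ p))
    have L4 := (L'.map (fun t => t ^ p))
    have E := (ea_lev N φ (n+1)).integrable hN
    rw [← key hN L1 hφ, ← key hN L2 hφ, ← integral_const_mul, ← integral_const_mul,
      ← integral_const_mul, ← integral_const_mul,
      ← integral_sub ((L3.integrable hN).const_mul _) ((L1.integrable_mul hN E).const_mul _),
      ← integral_sub ((L4.integrable hN).const_mul _) ((L2.integrable_mul hN E).const_mul _)]
    refine integral_mono_ae 
      (((L4.integrable hN).const_mul _).sub ((L2.integrable_mul hN E).const_mul _))
      (((L3.integrable hN).const_mul _).sub ((L1.integrable_mul hN E).const_mul _))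
      (ae_nuI fun x hx => ?_)
    have hle := le_mm N φ u n x
    exact scal_q hp (by linarith)

lemma young {p : ℝ} (hp : 1 < p) : ∃ K : ℝ, 0 ≤ K ∧ ∀ m x : ℝ, 0 ≤ m → 0 ≤ x →
    p * (m ^ (p-1) * x) ≤ (p-1)/2 * m ^ p + K * x ^ p := by
  set c := 2 * p / (p-1) with hc
  have hp1 : 0 < p - 1 := by linarith
  have hc0 : 0 < c := by positivity
  refine ⟨p * c^(p-1), by positivity, fun m x hm hx => ?_⟩
  rcases le_or_gt (c * x) m with h | h
  · have h1 : p * (m^(p-1) * x) ≤ (p-1)/2 * m ^ p := by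
      rw [← rpow_sub_one_mul hm hp]
      have : p * x ≤ (p-1)/2 * m := by
        have : p * x = (p-1)/2 * (c * x) := by rw [hc]; field_simp
        rw [this]; gcongr
      have h2 : 0 ≤ m ^ (p-1) := by positivity
      nlinarith
    have : 0 ≤ p * c^(p-1) * x^p := by positivity
    linarith
  · have h1 : m ^ (p-1) ≤ c^(p-1) * x^(p-1) := by
      rw [← Real.mul_rpow hc0.le hx]
      exact Real.rpow_le_rpow hm h.le hp1.le
    have : p * (m ^ (p-1) * x) ≤ p * c^(p-1) * x^p := by
      rw [← rpow_sub_one_mul hx hp]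
      calc p * (m ^ (p-1) * x) ≤ p * (c^(p-1) * x^(p-1) * x) := by gcongr
        _ = _ := by ring
    have : 0 ≤ (p-1)/2 * m^p := by positivity
    linarith

lemma mm_bound {N : ℕ} (hN : 2 ≤ N) {p : ℝ} (hp : 1 < p) {φ : ℝ → ℝ} (hφ : Integrable φ nuI)
    (hφp : Integrable (fun x => |φ x| ^ p) nuI)
    {u : ℝ} (hu0 : 0 < u) : ∃ B : ℝ, ∀ n, ∫ x, mm N φ u n x ^ p ∂nuI ≤ B := by
  obtain ⟨K, hK, hy⟩ := young hp
  refine ⟨((p-1) * u^p + K * ∫ x, |φ x|^p ∂nuI) / ((p-1)/2), fun n => ?_⟩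
  have h := step_q hN hp hφ hu0 n
  have L := mm_lev hN φ u n
  have L1 := (L.map (fun t => t ^ (p-1))).integrable_mul hN hφ.abs
  have L3 := (L.map (fun t => t ^ p)).integrable hN
  have h2 : p * ∫ x, mm N φ u n x ^ (p-1) * |φ x| ∂nuI ≤
      (p-1)/2 * ∫ x, mm N φ u n x ^ p ∂nuI + K * ∫ x, |φ x| ^ p ∂nuI := by
    rw [← integral_const_mul, ← integral_const_mul, ← integral_const_mul,
      ← integral_add (L3.const_mul _) (hφp.const_mul _)]
    refine integral_mono (L1.const_mul _) ((L3.const_mul _).add (hφp.const_mul _)) fun x => ?_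
    exact hy _ _ (hu0.le.trans (le_mm N φ u n x)) (abs_nonneg _)
  rw [le_div_iff₀ (by linarith)]
  linarith

lemma mm_le_of {N : ℕ} {φ : ℝ → ℝ} {u b x : ℝ} (hu : u ≤ b) (h : ∀ n, ea N φ n x ≤ b) (n : ℕ) :
    mm N φ u n x ≤ b := by
  induction n with
  | zero => exact hu
  | succ n ih => exact max_le ih (h _)

/-- the maximal function is a.e. finite, with integrable p-th power. -/
lemma main_lim {N : ℕ} (hN : 2 ≤ N) {p : ℝ} (hp : 1 < p) {φ : ℝ → ℝ} (hφ : Integrable φ nuI)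
    (hφp : Integrable (fun x => |φ x| ^ p) nuI)
    {u : ℝ} (hu0 : 0 < u) (hu : ∫ y, |φ y| ∂nuI ≤ u) :
    Integrable (fun x => max (adicMax N φ x) u ^ p) nuI ∧
    (∀ᵐ x ∂nuI, BddAbove (Set.range fun n => ea N φ n x)) := by
  obtain ⟨B, hB⟩ := mm_bound hN hp hφ hφp (u := u) hu0
  have hpos : ∀ n x, 0 < mm N φ u n x := fun n x => hu0.trans_le (le_mm N φ u n x)
  have hmeas : ∀ n, Measurable fun x => ENNReal.ofReal (mm N φ u n x ^ p) := fun n =>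
    ((mm_lev hN φ u n).map (fun t => t^p)).meas.ennreal_ofReal
  have hsup : ∫⁻ x, ⨆ n, ENNReal.ofReal (mm N φ u n x ^ p) ∂nuI ≤ ENNReal.ofReal B := by
    rw [lintegral_iSup hmeas]
    · refine iSup_le fun n => ?_
      rw [← ofReal_integral_eq_lintegral_ofReal
        (((mm_lev hN φ u n).map (fun t => t^p)).integrable hN)
        (Eventually.of_forall fun x => by have := hpos n x; positivity)]
      exact ENNReal.ofReal_le_ofReal (hB n)
    · intro i j hij x
      have := (hpos i x).le
      exact ENNReal.ofReal_le_ofReal (Real.rpow_le_rpow this (mm_mono N φ u x hij) (by linarith))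
  have hfin : ∀ᵐ x ∂nuI, (⨆ n, ENNReal.ofReal (mm N φ u n x ^ p)) < ⊤ :=
    ae_lt_top (Measurable.iSup hmeas) (ne_top_of_le_ne_top ENNReal.ofReal_ne_top hsup)
  have hbdd : ∀ᵐ x ∂nuI, BddAbove (Set.range fun n => ea N φ n x) := by
    filter_upwards [hfin, ae_restrict_mem measurableSet_Ico] with x hx hxI
    refine ⟨((⨆ n, ENNReal.ofReal (mm N φ u n x ^ p)).toReal)^(1/p), ?_⟩
    rintro _ ⟨n, rfl⟩
    have h1 : mm N φ u n x ^ p ≤ (⨆ n, ENNReal.ofReal (mm N φ u n x ^ p)).toReal := by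
      rw [← ENNReal.ofReal_le_iff_le_toReal hx.ne]
      exact le_iSup (fun n => ENNReal.ofReal (mm N φ u n x ^ p)) n
    have h0 := hpos n x
    refine (ea_le_mm N hu hxI n).trans ?_
    rw [one_div, Real.le_rpow_inv_iff_of_pos h0.le ENNReal.toReal_nonneg (by linarith)]
    exact h1
  refine ⟨?_, hbdd⟩
  have hm : AEMeasurable (fun x => max (adicMax N φ x) u ^ p) nuI :=
    ((adicMax_meas hN φ).max aemeasurable_const).pow_const p
  refine ⟨hm.aestronglyMeasurable, ?_⟩
  rw [hasFiniteIntegral_iff_ofReal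
    (Eventually.of_forall fun x => by have := hu0.le.trans (le_max_right (adicMax N φ x) u); positivity)]
  refine lt_of_le_of_lt (lintegral_mono_ae ?_) (hsup.trans_lt ENNReal.ofReal_lt_top)
  filter_upwards [hfin, hbdd, ae_restrict_mem measurableSet_Ico] with x hx hb hxI
  rw [← ENNReal.ofReal_toReal hx.ne]
  apply ENNReal.ofReal_le_ofReal
  have hT : ∀ n, mm N φ u n x ^ p ≤ (⨆ n, ENNReal.ofReal (mm N φ u n x ^ p)).toReal := fun n => by
    rw [← ENNReal.ofReal_le_iff_le_toReal hx.ne]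
    exact le_iSup (fun n => ENNReal.ofReal (mm N φ u n x ^ p)) n
  set T := (⨆ n, ENNReal.ofReal (mm N φ u n x ^ p)).toReal
  have hT0 : 0 ≤ T := ENNReal.toReal_nonneg
  have h2 : ∀ n, mm N φ u n x ≤ T^(1/p) := fun n => by
    rw [one_div, Real.le_rpow_inv_iff_of_pos (hpos n x).le hT0 (by linarith)]
    exact hT n
  have h3 : max (adicMax N φ x) u ≤ T^(1/p) := by
    refine max_le ?_ (h2 0)
    rw [adicMax_eq hN φ hxI]
    exact ciSup_le fun n => (ea_le_mm N hu hxI n).trans (h2 n)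
  have h4 : 0 ≤ max (adicMax N φ x) u := hu0.le.trans (le_max_right _ _)
  rwa [one_div, Real.le_rpow_inv_iff_of_pos h4 hT0 (by linarith)] at h3

lemma main_lb {N : ℕ} (hN : 2 ≤ N) {p : ℝ} (hp : 1 < p) {φ : ℝ → ℝ} (hφ : Integrable φ nuI)
    (hφp : Integrable (fun x => |φ x| ^ p) nuI)
    {u : ℝ} (hu0 : 0 < u) (hu : ∫ y, |φ y| ∂nuI ≤ u) :
    u ^ p + cN N p * (∫ x, |φ x|^p ∂nuI - u^(p-1) * ∫ y, |φ y| ∂nuI) ≤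
      ∫ x, max (adicMax N φ x) u ^ p ∂nuI := by
  obtain ⟨hI, hb⟩ := main_lim hN hp hφ hφp hu0 hu
  have hC := cN_pos hN hp
  have hp1 : 0 < p - 1 := by linarith
  set m := fun x => max (adicMax N φ x) u with hmdef
  have hmpos : ∀ x, 0 < m x := fun x => hu0.trans_le (le_max_right _ _)
  have hmle : ∀ᵐ x ∂nuI, ∀ n, mm N φ u n x ≤ m x := by
    filter_upwards [hb, ae_restrict_mem measurableSet_Ico] with x hx hxI n
    refine mm_le_of (le_max_right _ _) (fun n => le_trans ?_ (le_max_left _ _)) n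
    rw [adicMax_eq hN φ hxI]
    exact le_ciSup hx n
  have hφm : ∀ᵐ x ∂nuI, |φ x| ≤ m x := by
    filter_upwards [hmle, ea_tendsto hN hφ, ae_restrict_mem measurableSet_Ico] with x hx ht hxI
    exact le_of_tendsto ht (Eventually.of_forall fun n => (ea_le_mm N hu hxI n).trans (hx n))
  have hmm : AEMeasurable m nuI := (adicMax_meas hN φ).max aemeasurable_const
  -- limit
  have hlim : Tendsto (fun n => ∫ x, mm N φ u n x ^ (p-1) * |φ x| ∂nuI) atTop
      (nhds (∫ x, m x ^ (p-1) * |φ x| ∂nuI)) := by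
    refine tendsto_integral_of_dominated_convergence (fun x => m x ^ p)
      (fun n => (((mm_lev hN φ u n).map (fun t => t ^ (p-1))).integrable_mul hN
        hφ.abs).aestronglyMeasurable) hI (fun n => ?_) ?_
    · filter_upwards [hmle, hφm] with x hx hx'
      have h0 := hu0.trans_le (le_mm N φ u n x)
      have h1 := hmpos x
      rw [Real.norm_of_nonneg (by positivity), ← rpow_sub_one_mul h1.le hp]
      have := hx n
      gcongr
    · filter_upwards [hmle, hb, ae_restrict_mem measurableSet_Ico] with x hx hxb hxI
      refine Tendsto.mul_const _ (Tendsto.rpow_const ?_ (Or.inr hp1.le))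
      have hbd : BddAbove (Set.range fun n => mm N φ u n x) := ⟨m x, by rintro _ ⟨n, rfl⟩; exact hx n⟩
      have := tendsto_atTop_ciSup (mm_mono N φ u x) hbd
      convert this using 2
      apply le_antisymm
      · refine max_le ?_ (le_ciSup hbd 0)
        rw [adicMax_eq hN φ hxI]
        exact ciSup_le fun n => (ea_le_mm N hu hxI n).trans (le_ciSup hbd n)
      · exact ciSup_le hx
  have hstep : ∀ n, u ^ p - cN N p * (u^(p-1) * ∫ y, |φ y| ∂nuI) +
      cN N p * ∫ x, mm N φ u n x ^ (p-1) * |φ x| ∂nuI ≤ ∫ x, m x ^ p ∂nuI := fun n => by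
    have h1 := step_C hN hp hφ hu0 hu n
    have h2 : ∫ x, mm N φ u n x ^ p ∂nuI ≤ ∫ x, m x ^ p ∂nuI := by
      refine integral_mono_ae (((mm_lev hN φ u n).map (fun t => t ^ p)).integrable hN) hI ?_
      filter_upwards [hmle] with x hx
      have h0 := hu0.trans_le (le_mm N φ u n x)
      have := hx n
      show mm N φ u n x ^ p ≤ m x ^ p
      gcongr
    linarith
  have h3 := le_of_tendsto ((hlim.const_mul (cN N p)).const_add
    (u ^ p - cN N p * (u^(p-1) * ∫ y, |φ y| ∂nuI))) (Eventually.of_forall hstep)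
  have hIφ : Integrable (fun x => m x ^ (p-1) * |φ x|) nuI := by
    refine Integrable.mono' hI
      ((hmm.pow_const (p-1)).aestronglyMeasurable.mul hφ.abs.aestronglyMeasurable) ?_
    filter_upwards [hφm] with x hx'
    have h1 := hmpos x
    rw [Real.norm_of_nonneg (by positivity)]
    show _ ≤ m x ^ p
    rw [← rpow_sub_one_mul h1.le hp]
    gcongr
  have h4 : ∫ x, |φ x|^p ∂nuI ≤ ∫ x, m x ^ (p-1) * |φ x| ∂nuI := by
    refine integral_mono_ae hφp hIφ ?_
    filter_upwards [hφm] with x hx'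
    show |φ x|^p ≤ m x ^ (p-1) * |φ x|
    rw [← rpow_sub_one_mul (abs_nonneg _) hp]
    gcongr
  have := mul_le_mul_of_nonneg_left h4 hC.le
  linarith

/-- weak type, finite level -/
lemma weak_fin {N : ℕ} (hN : 2 ≤ N) {φ : ℝ → ℝ} (hφ : Integrable φ nuI) {u v : ℝ} (huv : u < v)
    (n : ℕ) : v * nuI.real {x | v ≤ mm N φ u n x} ≤ ∫ x in {x | v ≤ mm N φ u n x}, |φ x| ∂nuI := by
  have hms : ∀ n, MeasurableSet {x | v ≤ mm N φ u n x} := fun n =>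
    measurableSet_le measurable_const (mm_lev hN φ u n).meas
  induction n with
  | zero => simp [mm, huv.not_ge]
  | succ n ih =>
    set A := {x | v ≤ mm N φ u n x}
    set D := {x | mm N φ u n x < v ∧ v ≤ ea N φ (n+1) x}
    have hD : MeasurableSet D := (measurableSet_lt (mm_lev hN φ u n).meas measurable_const).inter
      (measurableSet_le measurable_const (ea_lev N φ (n+1)).meas)
    have hU : {x | v ≤ mm N φ u (n+1) x} = A ∪ D := by
      ext x
      simp only [A, D, mm, Set.mem_ofPred_eq, Set.mem_union, le_max_iff]
      rcases le_or_gt v (mm N φ u n x) with h | h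
      · simp [h]
      · simp [h, h.not_ge]
    have hdis : Disjoint A D := Set.disjoint_left.2 fun x hx hx' => not_lt.2 hx hx'.1
    rw [hU, measureReal_union hdis hD, setIntegral_union hdis hD hφ.abs.integrableOn
      hφ.abs.integrableOn, mul_add]
    refine add_le_add ih ?_
    classical
    have LD : Lev N (n+1) (D.indicator fun _ => (1:ℝ)) := by
      have := ((mm_lev hN φ u n).succ hN).map2 (ea_lev N φ (n+1))
        (fun a b => if a < v ∧ v ≤ b then (1:ℝ) else 0)
      convert this using 2 with x
      simp only [Set.indicator, D, Set.mem_ofPred_eq]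
    have hk := key hN LD hφ
    have e : ∀ h : ℝ → ℝ, ∫ x, D.indicator (fun _ => (1:ℝ)) x * h x ∂nuI = ∫ x in D, h x ∂nuI := by
      intro h
      rw [← integral_indicator hD]
      congr 1; ext x
      by_cases hx : x ∈ D <;> simp [hx]
    rw [e, e] at hk
    rw [← hk, mul_comm, ← smul_eq_mul, ← setIntegral_const]
    exact setIntegral_mono_on (integrable_const _).integrableOn
      ((ea_lev N φ (n+1)).integrable hN).integrableOn hD fun x hx => hx.2

lemma exists_between_set {A B : Set ℝ} (hA : MeasurableSet A) (hB : MeasurableSet B)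
    (hAB : A ⊆ B) (hBI : B ⊆ Set.Ico (0:ℝ) 1) {κ : ℝ} (h1 : volume.real A ≤ κ)
    (h2 : κ ≤ volume.real B) :
    ∃ E, MeasurableSet E ∧ A ⊆ E ∧ E ⊆ B ∧ volume.real E = κ := by
  have hfin : ∀ s ⊆ Set.Ico (0:ℝ) 1, volume s ≠ ⊤ := fun s hs =>
    ne_top_of_le_ne_top (by simp) (measure_mono hs)
  have hsub : ∀ t, A ∪ (B ∩ Set.Iio t) ⊆ B := fun t =>
    Set.union_subset hAB Set.inter_subset_left
  have hL : LipschitzWith 1 (fun t => volume.real (A ∪ (B ∩ Set.Iio t))) := by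
    refine LipschitzWith.of_le_add fun x y => ?_
    have : A ∪ (B ∩ Set.Iio x) ⊆ (A ∪ (B ∩ Set.Iio y)) ∪ Set.Ico y x := by
      rintro z (hz | ⟨hz, hz'⟩)
      · exact Or.inl (Or.inl hz)
      · rcases lt_or_ge z y with h | h
        · exact Or.inl (Or.inr ⟨hz, h⟩)
        · exact Or.inr ⟨h, hz'⟩
    have hf2 : volume ((A ∪ (B ∩ Set.Iio y)) ∪ Set.Ico y x) ≠ ⊤ :=
      (measure_union_lt_top (hfin _ ((hsub y).trans hBI)).lt_top (by simp)).ne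
    refine (measureReal_mono this hf2).trans ((measureReal_union_le _ _).trans ?_)
    gcongr
    rw [Measure.real, Real.volume_Ico, Real.dist_eq, ENNReal.toReal_ofReal']
    exact max_le (le_abs_self _) (abs_nonneg _)
  have e0 : A ∪ (B ∩ Set.Iio 0) = A := by
    rw [Set.union_eq_left]
    rintro z ⟨hz, hz'⟩
    exact absurd (hBI hz).1 (not_le.2 hz')
  have e1 : A ∪ (B ∩ Set.Iio 1) = B := by
    refine subset_antisymm (hsub 1) fun z hz => Or.inr ⟨hz, (hBI hz).2⟩
  have := intermediate_value_Icc (zero_le_one (α := ℝ)) hL.continuous.continuousOn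
  simp only [e0, e1] at this
  obtain ⟨t, -, ht⟩ := this ⟨h1, h2⟩
  exact ⟨_, hA.union (hB.inter measurableSet_Iio), Set.subset_union_left, hsub t, ht⟩

lemma quantile {g : ℝ → ℝ} (hg : Measurable g) {f κ : ℝ} (hgf : ∀ᵐ x ∂nuI, f ≤ g x)
    (hκ : κ ∈ Set.Ioc (0:ℝ) 1) :
    ∃ u, f ≤ u ∧ (∀ v, f ≤ v → v < u → κ < nuI.real {x | v < g x}) ∧
      ∃ E, MeasurableSet E ∧ E ⊆ Set.Ico (0:ℝ) 1 ∧ volume.real E = κ ∧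
      (∀ x ∈ Set.Ico (0:ℝ) 1, u < g x → x ∈ E) ∧ (∀ x ∈ E, u ≤ g x) := by
  set S := {v | f ≤ v ∧ nuI.real {x | v < g x} ≤ κ} with hS
  have hms : ∀ v, MeasurableSet {x | v < g x} := fun v => measurableSet_lt measurable_const hg
  have hne : S.Nonempty := by
    have ht := tendsto_measure_iInter_atTop (μ := nuI) (s := fun n : ℕ => {x | (n:ℝ) < g x})
      (fun n => (hms n).nullMeasurableSet)
      (fun i j hij x (hx : (j:ℝ) < g x) => lt_of_le_of_lt (by exact_mod_cast hij) hx)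
      ⟨0, measure_ne_top _ _⟩
    have hemp : ⋂ n : ℕ, {x | (n:ℝ) < g x} = ∅ := by
      ext x
      simp only [Set.mem_iInter, Set.mem_ofPred_eq, Set.mem_empty_iff_false, iff_false, not_forall,
        not_lt]
      exact exists_nat_ge _
    rw [hemp, measure_empty] at ht
    have h1 : ∀ᶠ n : ℕ in atTop, nuI {x | (n:ℝ) < g x} < ENNReal.ofReal κ :=
      ht.eventually_lt_const (by simpa using hκ.1)
    have h2 : ∀ᶠ n : ℕ in atTop, f ≤ (n:ℝ) := by
      filter_upwards [eventually_ge_atTop ⌈f⌉₊] with n hn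
      exact (Nat.le_ceil f).trans (by exact_mod_cast hn)
    obtain ⟨n, hn1, hn2⟩ := (h1.and h2).exists
    refine ⟨n, hn2, ?_⟩
    exact ENNReal.toReal_le_of_le_ofReal hκ.1.le hn1.le
  have hbd : BddBelow S := ⟨f, fun v hv => hv.1⟩
  set u := sInf S with hu
  have hfu : f ≤ u := le_csInf hne fun v hv => hv.1
  have hlow : ∀ v, f ≤ v → v < u → κ < nuI.real {x | v < g x} := by
    intro v hv hvu
    by_contra hcon
    exact absurd (csInf_le hbd (show v ∈ S from ⟨hv, not_lt.1 hcon⟩)) (not_le.2 hvu)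
  have hup : ∀ w, u < w → nuI.real {x | w < g x} ≤ κ := by
    intro w hw
    obtain ⟨v, hv, hvw⟩ := exists_lt_of_csInf_lt hne hw
    refine le_trans (measureReal_mono fun x (hx : w < g x) => ?_) hv.2
    exact hvw.trans hx
  refine ⟨u, hfu, hlow, ?_⟩
  have hA : nuI.real {x | u < g x} ≤ κ := by
    have ht := tendsto_measure_iUnion_atTop (μ := nuI)
      (s := fun n : ℕ => {x | u + 1/((n:ℝ)+1) < g x})
      (fun i j hij x (hx : u + 1/((i:ℝ)+1) < g x) => by
        refine lt_of_le_of_lt ?_ hx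
        have : (1:ℝ)/((j:ℝ)+1) ≤ 1/((i:ℝ)+1) := Nat.one_div_le_one_div hij
        linarith)
    have hun : ⋃ n : ℕ, {x | u + 1/((n:ℝ)+1) < g x} = {x | u < g x} := by
      ext x
      simp only [Set.mem_iUnion, Set.mem_ofPred_eq]
      constructor
      · rintro ⟨n, hn⟩
        have : (0:ℝ) < 1/((n:ℝ)+1) := by positivity
        linarith
      · intro hx
        obtain ⟨n, hn⟩ := exists_nat_one_div_lt (sub_pos.2 hx)
        exact ⟨n, by linarith⟩
    rw [hun] at ht
    refine ENNReal.toReal_le_of_le_ofReal hκ.1.le (le_of_tendsto ht (Eventually.of_forall fun n => ?_))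
    refine (ENNReal.le_ofReal_iff_toReal_le (measure_ne_top _ _) hκ.1.le).2 (hup _ ?_)
    have : (0:ℝ) < 1/((n:ℝ)+1) := by positivity
    linarith
  have hB : κ ≤ nuI.real {x | u ≤ g x} := by
    rcases hfu.eq_or_lt with h | h
    · have : nuI {x | u ≤ g x} = 1 := by
        rw [← h, ← measure_univ (μ := nuI)]
        exact measure_congr (by filter_upwards [hgf] with x hx; exact eq_true hx)
      rw [Measure.real, this]; simpa using hκ.2
    · have ht := tendsto_measure_iInter_atTop (μ := nuI)
        (s := fun n : ℕ => {x | u - (u-f)/((n:ℝ)+1) < g x})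
        (fun n => (hms _).nullMeasurableSet)
        (fun i j hij x (hx : u - (u-f)/((j:ℝ)+1) < g x) => by
          refine lt_of_le_of_lt ?_ hx
          have : (u-f)/((j:ℝ)+1) ≤ (u-f)/((i:ℝ)+1) := by
            have : 0 ≤ u - f := by linarith
            gcongr
          linarith) ⟨0, measure_ne_top _ _⟩
      have hin : ⋂ n : ℕ, {x | u - (u-f)/((n:ℝ)+1) < g x} = {x | u ≤ g x} := by
        ext x
        simp only [Set.mem_iInter, Set.mem_ofPred_eq]
        constructor
        · intro hx
          have ht : Tendsto (fun n : ℕ => u - (u-f)*(1/((n:ℝ)+1))) atTop (nhds (u - (u-f)*0)) :=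
            (tendsto_one_div_add_atTop_nhds_zero_nat.const_mul _).const_sub _
          rw [mul_zero, sub_zero] at ht
          refine le_of_tendsto ht (Eventually.of_forall fun n => ?_)
          have := hx n
          rw [mul_one_div]; exact this.le
        · intro hx n
          have : 0 < (u-f)/((n:ℝ)+1) := div_pos (by linarith) (by positivity)
          linarith
      rw [hin] at ht
      refine (ENNReal.ofReal_le_iff_le_toReal (measure_ne_top _ _)).1
        (ge_of_tendsto ht (Eventually.of_forall fun n => ?_))
      refine (ENNReal.ofReal_le_iff_le_toReal (measure_ne_top _ _)).2 (hlow _ ?_ ?_).le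
      · have : (u-f)/((n:ℝ)+1) ≤ u - f := div_le_self (by linarith) (by
          have : (0:ℝ) ≤ n := by positivity
          linarith)
        linarith
      · have : 0 < (u-f)/((n:ℝ)+1) := div_pos (by linarith) (by positivity)
        linarith
  have hms2 : MeasurableSet {x | u ≤ g x} := measurableSet_le measurable_const hg
  rw [measureReal_restrict_apply (hms u)] at hA
  rw [measureReal_restrict_apply hms2] at hB
  obtain ⟨E, hE, hAE, hEB, hvE⟩ := exists_between_set ((hms u).inter measurableSet_Ico)
    (hms2.inter measurableSet_Ico)
    (Set.inter_subset_inter_left _ fun x (hx : u < g x) => (le_of_lt hx : u ≤ g x))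
    Set.inter_subset_right hA hB
  exact ⟨E, hE, hEB.trans Set.inter_subset_right, hvE, fun x hx hux => hAE ⟨hux, hx⟩,
    fun x hx => (hEB hx).1⟩

lemma lower {N : ℕ} (hN : 2 ≤ N) {p f F κ : ℝ} (hp : 1 < p)
    (hf : 0 < f) (hF : 0 < F) (hfF : f ^ p ≤ F) (hκ : κ ∈ Set.Ioc (0:ℝ) 1) {φ : ℝ → ℝ}
    (h0 : ∀ x ∈ Set.Ico (0:ℝ) 1, 0 ≤ φ x)
    (h1 : (∫ x in Set.Ico (0:ℝ) 1, φ x) = f) (h2 : (∫ x in Set.Ico (0:ℝ) 1, φ x ^ p) = F) :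
    ∃ u ∈ Set.Icc f (min ((F / f) ^ (1 / (p - 1))) (f / κ)),
      κ * u ^ p + cN N p * (F - u ^ (p - 1) * f) ≤ supMeas N p κ φ := by
  have hp1 : 0 < p - 1 := by linarith
  have hφ : Integrable φ nuI := by
    by_contra h
    rw [integral_undef h] at h1; exact hf.ne h1
  have habs : (fun x => |φ x| ^ p) =ᵐ[nuI] fun x => φ x ^ p :=
    ae_nuI fun x hx => by simp only [abs_of_nonneg (h0 x hx)]
  have hφp : Integrable (fun x => |φ x| ^ p) nuI := by
    rw [integrable_congr habs]
    by_contra h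
    rw [integral_undef h] at h2; exact hF.ne h2
  have hm1 : ∫ y, |φ y| ∂nuI = f := by
    rw [← h1]; exact integral_congr_ae (ae_nuI fun x hx => abs_of_nonneg (h0 x hx))
  have hm2 : ∫ y, |φ y|^p ∂nuI = F := by
    rw [← h2]; exact integral_congr_ae habs
  obtain ⟨hIf, hbdd⟩ := main_lim hN hp hφ hφp hf hm1.le
  set g := fun x => ⨆ n, ea N φ n x with hg
  have hgm : Measurable g := Measurable.iSup fun n => (ea_lev N φ n).meas
  have hMg : ∀ x ∈ Set.Ico (0:ℝ) 1, adicMax N φ x = g x := fun x hx => adicMax_eq hN φ hx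
  have hgf : ∀ᵐ x ∂nuI, f ≤ g x := by
    filter_upwards [hbdd, ae_restrict_mem measurableSet_Ico] with x hx hxI
    rw [← hm1, ← ea_zero N φ hxI]
    exact le_ciSup hx 0
  have hMf : ∀ᵐ x ∂nuI, f ≤ adicMax N φ x := by
    filter_upwards [hgf, ae_restrict_mem measurableSet_Ico] with x hx hxI
    rwa [hMg x hxI]
  have hMI : Integrable (fun x => adicMax N φ x ^ p) nuI := by
    refine hIf.congr ?_
    filter_upwards [hMf] with x hx
    rw [max_eq_left hx]
  obtain ⟨u, hfu, hlow, E, hE, hEI, hvE, hEu, huE⟩ := quantile hgm hgf hκ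
  have hu0 : 0 < u := hf.trans_le hfu
  -- weak type
  have hweak : u ≤ f / κ := by
    refine le_of_forall_lt fun w hw => ?_
    rcases le_or_gt w f with h | h
    · obtain ⟨v, hv⟩ : ∃ v, max f w ≤ v ∧ v < u ∨ u = f := by
        rcases hfu.eq_or_lt with h' | h'
        · exact ⟨0, Or.inr h'.symm⟩
        · exact ⟨max f w, Or.inl ⟨le_rfl, max_lt h' hw⟩⟩
      have hfk : f ≤ f / κ := by rw [le_div_iff₀ hκ.1]; nlinarith [hκ.2]
      rcases h.eq_or_lt with h' | h'
      · subst h'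
        -- w = f < u
        have := hlow w le_rfl hw
        have hk1 : κ < 1 := lt_of_lt_of_le this (by
          have := measureReal_le_one (μ := nuI) (s := {x | w < g x}); exact this)
        rw [lt_div_iff₀ hκ.1]; nlinarith
      · linarith
    · obtain ⟨w', hw1, hw2⟩ := exists_between hw
      have hk := hlow w' (by linarith) hw2
      have ht := tendsto_measure_iUnion_atTop (μ := nuI)
        (s := fun n : ℕ => {x | w' ≤ mm N φ f n x})
        (fun i j hij x (hx : w' ≤ mm N φ f i x) => hx.trans (mm_mono N φ f x hij))
      have hle : nuI {x | w' < g x} ≤ nuI (⋃ n : ℕ, {x | w' ≤ mm N φ f n x}) := by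
        refine measure_mono_ae ?_
        filter_upwards [ae_restrict_mem measurableSet_Ico] with x hxI hx
        obtain ⟨n, hn⟩ := exists_lt_of_lt_ciSup (show w' < ⨆ n, ea N φ n x from hx)
        exact Set.mem_iUnion.2 ⟨n, hn.le.trans (ea_le_mm N hm1.le hxI n)⟩
      have hk' : ENNReal.ofReal κ < nuI {x | w' < g x} := by
        rw [ENNReal.ofReal_lt_iff_lt_toReal hκ.1.le (measure_ne_top _ _)]; exact hk
      obtain ⟨n, hn⟩ := (ht.eventually_const_lt (hk'.trans_le hle)).exists
      rw [Function.comp_apply] at hn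
      rw [ENNReal.ofReal_lt_iff_lt_toReal hκ.1.le (measure_ne_top _ _)] at hn
      have hwf := weak_fin hN hφ (show f < w' by linarith) n
      have hle2 : ∫ x in {x | w' ≤ mm N φ f n x}, |φ x| ∂nuI ≤ f := by
        rw [← hm1]
        exact setIntegral_le_integral hφ.abs (Eventually.of_forall fun _ => abs_nonneg _)
      rw [lt_div_iff₀ hκ.1]
      have hn' : κ < nuI.real {x | w' ≤ mm N φ f n x} := hn
      nlinarith [hκ.1]
  -- sup bounds
  have hEr : nuI.restrict E = volume.restrict E := by
    rw [nuI, Measure.restrict_restrict hE, Set.inter_eq_left.2 hEI]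
  have hvE' : volume E = ENNReal.ofReal κ := by
    rw [← hvE, Measure.real, ENNReal.ofReal_toReal]
    exact ne_top_of_le_ne_top (by simp) (measure_mono hEI)
  have hsup : ∫ x in E, adicMax N φ x ^ p ≤ supMeas N p κ φ := by
    refine le_csSup ⟨∫ x, adicMax N φ x ^ p ∂nuI, ?_⟩ ⟨E, hE, hEI, hvE', rfl⟩
    rintro _ ⟨E', hE', hEI', -, rfl⟩
    refine setIntegral_mono_set hMI ?_ hEI'.eventuallyLE
    filter_upwards [hMf] with x hx
    have : 0 ≤ adicMax N φ x := hf.le.trans hx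
    show 0 ≤ adicMax N φ x ^ p
    positivity
  have hMIE : IntegrableOn (fun x => adicMax N φ x ^ p) E volume := 
    hMI.mono_measure (Measure.restrict_mono hEI le_rfl)
  have hlowE : κ * u ^ p ≤ ∫ x in E, adicMax N φ x ^ p := by
    rw [← hvE, ← smul_eq_mul, ← setIntegral_const]
    refine setIntegral_mono_on (integrableOn_const (by rw [hvE']; simp)) hMIE hE fun x hx => ?_
    have := huE x hx
    rw [hMg x (hEI hx)]
    gcongr
  have hfF' : f ≤ (F / f) ^ (1 / (p - 1)) := by
    rw [one_div, Real.le_rpow_inv_iff_of_pos hf.le (by positivity) hp1, le_div_iff₀ hf,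
      rpow_sub_one_mul hf.le hp]
    exact hfF
  rcases le_or_gt u ((F / f) ^ (1 / (p - 1))) with hcase | hcase
  · refine ⟨u, ⟨hfu, le_min hcase hweak⟩, le_trans ?_ hsup⟩
    have hlb := main_lb hN hp hφ hφp hu0 (hm1.le.trans hfu)
    obtain ⟨hIu, -⟩ := main_lim hN hp hφ hφp hu0 (hm1.le.trans hfu)
    rw [hm1, hm2] at hlb
    have e : ∫ x in E, adicMax N φ x ^ p = κ * u ^ p + ∫ x in E, (adicMax N φ x ^ p - u^p) := by
      rw [integral_sub hMIE (integrableOn_const (by rw [hvE']; simp)), setIntegral_const, hvE,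
        smul_eq_mul]
      ring
    have e2 : ∫ x in E, (adicMax N φ x ^ p - u^p) = ∫ x, (max (adicMax N φ x) u ^ p - u^p) ∂nuI := by
      have : ∫ x in E, (adicMax N φ x ^ p - u^p) = ∫ x in E, (max (adicMax N φ x) u ^ p - u^p) := by
        refine setIntegral_congr_fun hE fun x hx => ?_
        have := huE x hx
        rw [← hMg x (hEI hx)] at this
        simp only [max_eq_left this]
      rw [this, nuI]
      refine (setIntegral_eq_of_subset_of_forall_sdiff_eq_zero measurableSet_Ico hEI ?_).symm
      intro x hx
      have : adicMax N φ x ≤ u := by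
        rw [hMg x hx.1]
        by_contra hc
        exact hx.2 (hEu x hx.1 (not_le.1 hc))
      rw [max_eq_right this, sub_self]
    rw [e, e2, integral_sub hIu (integrable_const _)]
    simp
    linarith
  · refine ⟨(F / f) ^ (1 / (p - 1)), ⟨hfF', le_min le_rfl (hcase.le.trans hweak)⟩, le_trans ?_ hsup⟩
    refine le_trans ?_ hlowE
    have : ((F / f) ^ (1 / (p - 1))) ^ (p-1) = F / f := by
      rw [← Real.rpow_mul (by positivity), one_div, inv_mul_cancel₀ hp1.ne', Real.rpow_one]
    rw [this, div_mul_cancel₀ _ hf.ne', sub_self, mul_zero, add_zero]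
    have := hκ.1
    gcongr

noncomputable def cc (N : ℕ) (ψ : ℕ → ℝ → ℝ) (y : ℝ) : ℝ :=
  ψ ⌊(N:ℝ) * y⌋₊ ((N:ℝ) * y - ⌊(N:ℝ) * y⌋₊)

noncomputable def MM (N : ℕ) (φ : ℝ → ℝ) (u x : ℝ) : ℝ := max (⨆ n, ea N φ n x) u

structure BM (B : ℝ) (φ : ℝ → ℝ) : Prop where
  m : Measurable φ
  nn : ∀ y, 0 ≤ φ y
  le : ∀ y, φ y ≤ B

lemma BM.int {B : ℝ} {φ : ℝ → ℝ} (h : BM B φ) : Integrable φ nuI :=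
  Integrable.of_bound h.m.aestronglyMeasurable B
    (Eventually.of_forall fun y => by rw [Real.norm_of_nonneg (h.nn y)]; exact h.le y)

lemma BM.rpow {B : ℝ} {φ : ℝ → ℝ} (h : BM B φ) {p : ℝ} (hp : 1 < p) :
    BM (B^p) (fun x => φ x ^ p) :=
  ⟨h.m.pow_const p, fun y => by have := h.nn y; positivity,
    fun y => Real.rpow_le_rpow (h.nn y) (h.le y) (by linarith)⟩

lemma BM.ea_le {N : ℕ} (hN : 2 ≤ N) {B : ℝ} {φ : ℝ → ℝ} (h : BM B φ) (n : ℕ) (x : ℝ) :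
    ea N φ n x ≤ B := by
  unfold ea adicAvg
  set k := ⌊x * (N:ℝ)^n⌋₊
  have hp := powN_pos hN n
  have hf : volume (adicItv N n k) ≠ ⊤ := by rw [adicItv_vol hN]; simp
  have h1 : ∫ y in adicItv N n k, |φ y| ≤ ∫ y in adicItv N n k, B := by
    refine integral_mono_of_nonneg (Eventually.of_forall fun _ => abs_nonneg _)
      (integrableOn_const hf) (Eventually.of_forall fun y => ?_)
    show |φ y| ≤ B
    rw [abs_of_nonneg (h.nn y)]; exact h.le y
  rw [setIntegral_const, Measure.real, adicItv_vol hN, ENNReal.toReal_ofReal (by positivity),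
    smul_eq_mul] at h1
  calc _ ≤ (N:ℝ)^n * (1 / (N:ℝ)^n * B) := by gcongr
    _ = B := by field_simp

lemma BM.bdd {N : ℕ} (hN : 2 ≤ N) {B : ℝ} {φ : ℝ → ℝ} (h : BM B φ) (x : ℝ) :
    BddAbove (Set.range fun n => ea N φ n x) := ⟨B, by rintro _ ⟨n, rfl⟩; exact h.ea_le hN n x⟩

lemma BM.MM {N : ℕ} (hN : 2 ≤ N) {B : ℝ} {φ : ℝ → ℝ} (h : BM B φ) {u : ℝ} (hu : 0 ≤ u) :
    BM (max B u) (MM N φ u) :=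
  ⟨(Measurable.iSup fun n => (ea_lev N φ n).meas).max measurable_const,
    fun _ => hu.trans (le_max_right _ _),
    fun y => max_le_max (ciSup_le fun n => h.ea_le hN n y) le_rfl⟩

lemma cc_BM {N : ℕ} {B : ℝ} {ψ : ℕ → ℝ → ℝ} (h : ∀ i, BM B (ψ i)) : BM B (cc N ψ) := by
  refine ⟨?_, fun y => (h _).nn _, fun y => (h _).le _⟩
  have h1 : Measurable fun q : ℕ × ℝ => ψ q.1 q.2 := measurable_from_prod_countable_right fun i => (h i).m
  have h2 : Measurable fun y : ℝ => (⌊(N:ℝ) * y⌋₊, (N:ℝ) * y - ⌊(N:ℝ) * y⌋₊) := by fun_prop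
  exact h1.comp h2

lemma cc_itv {N : ℕ} (hN : 2 ≤ N) (ψ : ℕ → ℝ → ℝ) (i m j : ℕ) (hj : j < N^m) (H : ℝ → ℝ) :
    ∫ y in adicItv N (m+1) (i * N^m + j), H (cc N ψ y) =
      (N:ℝ)⁻¹ * ∫ y in adicItv N m j, H (ψ i y) := by
  have hp := powN_pos hN m
  have hN0 : (0:ℝ) < N := by exact_mod_cast (by omega : 0 < N)
  have hj' : (j:ℝ) + 1 ≤ (N:ℝ)^m := by exact_mod_cast hj
  have e1 : ∫ y in adicItv N (m+1) (i * N^m + j), H (cc N ψ y) =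
      ∫ y in adicItv N (m+1) (i * N^m + j), H (ψ i ((N:ℝ) * y - i)) := by
    refine setIntegral_congr_fun measurableSet_Ico fun y hy => ?_
    have hfl : ⌊(N:ℝ) * y⌋₊ = i := by
      unfold adicItv at hy
      obtain ⟨hy1, hy2⟩ := hy
      push_cast at hy1 hy2
      rw [div_le_iff₀ (by positivity), pow_succ] at hy1
      rw [lt_div_iff₀ (by positivity), pow_succ] at hy2
      have hj0 : (0:ℝ) ≤ j := by positivity
      have a1 : (i:ℝ) ≤ N * y := by
        by_contra hc
        nlinarith
      have a2 : (N:ℝ) * y < i + 1 := by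
        by_contra hc
        nlinarith
      exact (Nat.floor_eq_iff (le_trans (by positivity) a1)).2 ⟨a1, a2⟩
    simp only [cc, hfl]
  rw [e1]
  unfold adicItv
  rw [integral_Ico_eq_integral_Ioc, integral_Ico_eq_integral_Ioc,
    ← intervalIntegral.integral_of_le (by gcongr; linarith),
    ← intervalIntegral.integral_of_le (by gcongr; linarith),
    intervalIntegral.integral_comp_mul_sub (fun y => H (ψ i y)) hN0.ne' (i:ℝ), smul_eq_mul]
  congr 2
  · push_cast; rw [pow_succ]; field_simp; ring
  · push_cast; rw [pow_succ]; field_simp; ring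

lemma cc_int {N : ℕ} (hN : 2 ≤ N) {B : ℝ} {ψ : ℕ → ℝ → ℝ} (h : ∀ i, BM B (ψ i)) :
    ∫ y, cc N ψ y ∂nuI = (N:ℝ)⁻¹ * ∑ i ∈ Finset.range N, ∫ y, ψ i y ∂nuI := by
  rw [integral_split hN 1 (cc_BM h).int, pow_one, Finset.mul_sum]
  refine Finset.sum_congr rfl fun i _ => ?_
  have := cc_itv hN ψ i 0 0 (by simp) (fun t => t)
  simpa [adicItv, nuI] using this

lemma ea_cc {N : ℕ} (hN : 2 ≤ N) (ψ : ℕ → ℝ → ℝ) (m : ℕ) {y : ℝ} (hy : y ∈ Set.Ico (0:ℝ) 1) :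
    ea N (cc N ψ) (m+1) y = ea N (ψ ⌊(N:ℝ) * y⌋₊) m ((N:ℝ) * y - ⌊(N:ℝ) * y⌋₊) := by
  have hN0 : (0:ℝ) < N := by exact_mod_cast (by omega : 0 < N)
  set i := ⌊(N:ℝ) * y⌋₊ with hi
  have hNy : 0 ≤ (N:ℝ) * y := mul_nonneg hN0.le hy.1
  have hz : (N:ℝ) * y - i ∈ Set.Ico (0:ℝ) 1 := by
    constructor
    · linarith [Nat.floor_le hNy]
    · linarith [Nat.lt_floor_add_one ((N:ℝ) * y)]
  have hfl : ⌊y * (N:ℝ)^(m+1)⌋₊ = i * N^m + ⌊((N:ℝ) * y - i) * (N:ℝ)^m⌋₊ := by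
    rw [show y * (N:ℝ)^(m+1) = ((N:ℝ) * y - i) * (N:ℝ)^m + ((i * N^m : ℕ):ℝ) by
      push_cast; rw [pow_succ]; ring]
    rw [Nat.floor_add_natCast (mul_nonneg hz.1 (powN_pos hN m).le), add_comm]
  unfold ea adicAvg
  rw [hfl, cc_itv hN ψ i m _ (floor_lt hN hz m) (fun t => |t|), pow_succ]
  field_simp

lemma MM_cc {N : ℕ} (hN : 2 ≤ N) {B : ℝ} {ψ : ℕ → ℝ → ℝ} (h : ∀ i, BM B (ψ i)) {u : ℝ}
    (hu : ∫ y, cc N ψ y ∂nuI ≤ u) {y : ℝ} (hy : y ∈ Set.Ico (0:ℝ) 1) :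
    MM N (cc N ψ) u y = cc N (fun i => MM N (ψ i) u) y := by
  have hb := cc_BM (N := N) h
  have h0 : ea N (cc N ψ) 0 y ≤ u := by
    rw [ea_zero N _ hy]
    refine le_trans (le_of_eq ?_) hu
    congr 1; ext z; exact abs_of_nonneg (hb.nn z)
  unfold MM
  simp only [cc]
  apply le_antisymm
  · refine max_le (ciSup_le fun n => ?_) (le_max_right _ _)
    cases n with
    | zero => exact h0.trans (le_max_right _ _)
    | succ m =>
      rw [ea_cc hN ψ m hy]
      exact (le_ciSup ((h _).bdd hN _) m).trans (le_max_left _ _)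
  · refine max_le (ciSup_le fun n => ?_) (le_max_right _ _)
    rw [← ea_cc hN ψ n hy]
    exact (le_ciSup (hb.bdd hN y) (n+1)).trans (le_max_left _ _)

lemma cc_core {N : ℕ} (hN : 2 ≤ N) {p : ℝ} (hp : 1 < p) {B : ℝ} {ψ : ℕ → ℝ → ℝ}
    (h : ∀ i, BM B (ψ i)) {u : ℝ} (hu0 : 0 ≤ u) (hu : ∫ y, cc N ψ y ∂nuI ≤ u) :
    ∫ y, cc N ψ y ^ p ∂nuI = (N:ℝ)⁻¹ * ∑ i ∈ Finset.range N, ∫ y, ψ i y ^ p ∂nuI ∧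
    ∫ y, MM N (cc N ψ) u y ^ p ∂nuI =
      (N:ℝ)⁻¹ * ∑ i ∈ Finset.range N, ∫ y, MM N (ψ i) u y ^ p ∂nuI := by
  constructor
  · exact cc_int hN (ψ := fun i y => ψ i y ^ p) (fun i => (h i).rpow hp)
  · rw [← cc_int hN (ψ := fun i y => MM N (ψ i) u y ^ p) (fun i => ((h i).MM hN hu0).rpow hp)]
    refine integral_congr_ae (ae_nuI fun y hy => ?_)
    show MM N (cc N ψ) u y ^ p = _
    rw [MM_cc hN h hu hy]
    rfl

def Ach (N : ℕ) (p u x A : ℝ) : Prop := ∃ (φ : ℝ → ℝ) (B : ℝ), BM B φ ∧ ∫ y, φ y ∂nuI = x ∧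
  ∫ y, φ y ^ p ∂nuI = A ∧ ∫ y, MM N φ u y ^ p ∂nuI ≤ u^p + cN N p * (A - u^(p-1) * x)

lemma ach_cc {N : ℕ} (hN : 2 ≤ N) {p : ℝ} (hp : 1 < p) {u : ℝ} (hu0 : 0 ≤ u) {x A : ℕ → ℝ}
    (h : ∀ i, Ach N p u (x i) (A i)) (hx : ∀ i, x i ≤ u) :
    Ach N p u ((N:ℝ)⁻¹ * ∑ i ∈ Finset.range N, x i) ((N:ℝ)⁻¹ * ∑ i ∈ Finset.range N, A i) := by
  choose φ B hφ hφx hφA hφM using h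
  have hN0 : (0:ℝ) < N := by exact_mod_cast (by omega : 0 < N)
  set ψ : ℕ → ℝ → ℝ := fun i => φ (i % N) with hψ
  have hmod : ∀ i ∈ Finset.range N, ψ i = φ i := fun i hi => by
    simp only [hψ, Nat.mod_eq_of_lt (Finset.mem_range.1 hi)]
  have hBM : ∀ i, BM (∑ j ∈ Finset.range N, |B j|) (ψ i) := fun i =>
    ⟨(hφ _).m, (hφ _).nn, fun y => ((hφ _).le y).trans ((le_abs_self _).trans
      (Finset.single_le_sum (f := fun j => |B j|) (fun _ _ => abs_nonneg _)
        (Finset.mem_range.2 (Nat.mod_lt _ (by omega)))))⟩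
  have hmean : ∫ y, cc N ψ y ∂nuI = (N:ℝ)⁻¹ * ∑ i ∈ Finset.range N, x i := by
    rw [cc_int hN hBM]
    congr 1
    exact Finset.sum_congr rfl fun i hi => by rw [hmod i hi, hφx]
  have hle : ∫ y, cc N ψ y ∂nuI ≤ u := by
    rw [hmean, inv_mul_le_iff₀ hN0]
    refine (Finset.sum_le_sum fun i _ => hx i).trans ?_
    simp
  obtain ⟨c1, c2⟩ := cc_core hN hp hBM hu0 hle
  refine ⟨cc N ψ, _, cc_BM hBM, hmean, ?_, ?_⟩
  · rw [c1]; congr 1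
    exact Finset.sum_congr rfl fun i hi => by rw [hmod i hi, hφA]
  · rw [c2]
    have : ∑ i ∈ Finset.range N, ∫ y, MM N (ψ i) u y ^ p ∂nuI ≤
        ∑ i ∈ Finset.range N, (u^p + cN N p * (A i - u^(p-1) * x i)) :=
      Finset.sum_le_sum fun i hi => by rw [hmod i hi]; exact hφM i
    refine (mul_le_mul_of_nonneg_left this (by positivity)).trans (le_of_eq ?_)
    rw [Finset.sum_add_distrib, ← Finset.mul_sum, Finset.sum_sub_distrib, ← Finset.mul_sum]
    simp
    field_simp

lemma BM_const {c : ℝ} (hc : 0 ≤ c) : BM c (fun _ => c) := ⟨measurable_const, fun _ => hc, fun _ => le_rfl⟩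

lemma MM_zero {N : ℕ} {u : ℝ} (hu : 0 ≤ u) (x : ℝ) : MM N (fun _ => 0) u x = u := by
  simp [MM, ea, adicAvg, hu]

lemma ach_zero {N : ℕ} {p : ℝ} (hp : 1 < p) {u : ℝ} (hu0 : 0 ≤ u) : Ach N p u 0 0 := by
  refine ⟨fun _ => 0, 0, BM_const le_rfl, by simp, ?_, ?_⟩
  · simp [Real.zero_rpow (show p ≠ 0 by linarith)]
  · simp [MM_zero hu0]

lemma ach_u {N : ℕ} (hN : 2 ≤ N) {p : ℝ} (hp : 1 < p) {u : ℝ} (hu0 : 0 ≤ u) :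
    Ach N p u u (u^p) := by
  refine ⟨fun _ => u, u, BM_const hu0, by simp, by simp, ?_⟩
  rw [rpow_sub_one_mul hu0 hp]
  have : ∀ y, MM N (fun _ => u) u y = u := fun y =>
    max_eq_right (ciSup_le fun n => (BM_const hu0).ea_le hN n y)
  simp [this]

lemma ach_jump {N : ℕ} (hN : 2 ≤ N) {p : ℝ} (hp : 1 < p) {u A : ℝ} (hu0 : 0 ≤ u)
    (h : Ach N p u u A) : Ach N p u u ((N:ℝ)^p / N * A) := by
  obtain ⟨φ, B, hφ, hx, hA, hM⟩ := h
  have hN0 : (0:ℝ) < N := by exact_mod_cast (by omega : 0 < N)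
  have hN1 : (1:ℝ) ≤ N := by exact_mod_cast (by omega : 1 ≤ N)
  have hB0 : 0 ≤ B := (hφ.nn 0).trans (hφ.le 0)
  set ψ : ℕ → ℝ → ℝ := fun i => if i = 0 then fun y => N * φ y else fun _ => 0 with hψ
  have hb0 : BM (N * B) (fun y => N * φ y) := ⟨hφ.m.const_mul _, fun y => mul_nonneg hN0.le (hφ.nn y),
    fun y => mul_le_mul_of_nonneg_left (hφ.le y) hN0.le⟩
  have hBM : ∀ i, BM (N * B) (ψ i) := fun i => by
    by_cases hi : i = 0
    · simp only [hψ, hi, if_true]; exact hb0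
    · simp only [hψ, hi, if_false]
      exact ⟨measurable_const, fun _ => le_rfl, fun _ => by positivity⟩
  have hs : ∀ G : (ℝ → ℝ) → ℝ, ∑ i ∈ Finset.range N, G (ψ i) =
      G (fun y => N * φ y) + ((N:ℝ) - 1) * G (fun _ => 0) := fun G => by
    obtain ⟨K, rfl⟩ : ∃ K, N = K + 1 := ⟨N - 1, by omega⟩
    rw [Finset.sum_range_succ']
    simp [hψ]
    ring
  have hmean : ∫ y, cc N ψ y ∂nuI = u := by
    rw [cc_int hN hBM, hs fun g => ∫ y, g y ∂nuI]
    rw [integral_const_mul, hx]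
    simp
    field_simp
  obtain ⟨c1, c2⟩ := cc_core hN hp hBM hu0 hmean.le
  refine ⟨cc N ψ, _, cc_BM hBM, hmean, ?_, ?_⟩
  · rw [c1, hs fun g => ∫ y, g y ^ p ∂nuI]
    simp_rw [Real.mul_rpow hN0.le (hφ.nn _)]
    rw [integral_const_mul, hA]
    simp [Real.zero_rpow (show p ≠ 0 by linarith)]
    ring
  · rw [c2, hs fun g => ∫ y, MM N g u y ^ p ∂nuI]
    have hea : ∀ n y, ea N (fun y => N * φ y) n y = N * ea N φ n y := fun n y => by
      simp only [ea, adicAvg, abs_mul, integral_const_mul, abs_of_pos hN0]; ring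
    have h1 : ∫ y, MM N (fun y => N * φ y) u y ^ p ∂nuI ≤ (N:ℝ)^p * ∫ y, MM N φ u y ^ p ∂nuI := by
      rw [← integral_const_mul]
      refine integral_mono ((hb0.MM hN hu0).rpow hp).int
        (((hφ.MM hN hu0).rpow hp).int.const_mul _) fun y => ?_
      have hm0 := (hφ.MM hN hu0).nn y
      show _ ≤ (N:ℝ)^p * MM N φ u y ^ p
      rw [← Real.mul_rpow hN0.le hm0]
      refine Real.rpow_le_rpow ((hb0.MM hN hu0).nn y) ?_ (by linarith)
      refine max_le (ciSup_le fun n => ?_) ?_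
      · rw [hea]
        exact mul_le_mul_of_nonneg_left ((le_ciSup (hφ.bdd hN y) n).trans (le_max_left _ _)) hN0.le
      · calc u ≤ MM N φ u y := le_max_right _ _
          _ ≤ _ := le_mul_of_one_le_left hm0 hN1
    have h2 : ∫ y, MM N (fun _ => 0) u y ^ p ∂nuI = u^p := by simp [MM_zero hu0]
    rw [h2, rpow_sub_one_mul hu0 hp]
    rw [rpow_sub_one_mul hu0 hp] at hM
    have hNp0 : 0 ≤ (N:ℝ)^p := by positivity
    have h3 := h1.trans (mul_le_mul_of_nonneg_left hM hNp0)
    refine (mul_le_mul_of_nonneg_left (add_le_add_left h3 _) (by positivity)).trans (le_of_eq ?_)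
    have := Np_gt hN hp
    have h4 : (N:ℝ)^p - N ≠ 0 := by linarith
    unfold cN
    field_simp
    ring

lemma ach_pow {N : ℕ} (hN : 2 ≤ N) {p : ℝ} (hp : 1 < p) {u : ℝ} (hu0 : 0 < u) (T : ℝ) :
    ∃ A, T < A ∧ Ach N p u u A := by
  have hN0 : (0:ℝ) < N := by exact_mod_cast (by omega : 0 < N)
  have h1 : 1 < (N:ℝ)^p / N := by rw [lt_div_iff₀ hN0]; linarith [Np_gt hN hp]
  have h : ∀ j : ℕ, Ach N p u u (((N:ℝ)^p / N)^j * u^p) := fun j => by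
    induction j with
    | zero => simpa using ach_u hN hp hu0.le
    | succ j ih =>
      have := ach_jump hN hp hu0.le ih
      rwa [← mul_assoc, ← pow_succ'] at this
  have hup : 0 < u^p := by positivity
  obtain ⟨j, hj⟩ := pow_unbounded_of_one_lt (T / u^p) h1
  exact ⟨_, by rwa [div_lt_iff₀ hup] at hj, h j⟩

lemma ach_mix {N : ℕ} (hN : 2 ≤ N) {p : ℝ} (hp : 1 < p) {u : ℝ} (hu0 : 0 ≤ u) {x A x' A' : ℝ}
    (h : Ach N p u x A) (h' : Ach N p u x' A') (hx : x ≤ u) (hx' : x' ≤ u) (n : ℕ) :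
    ∀ r : ℕ, r ≤ N^n → Ach N p u ((r / (N:ℝ)^n) * x + (1 - r / (N:ℝ)^n) * x')
      ((r / (N:ℝ)^n) * A + (1 - r / (N:ℝ)^n) * A') := by
  have hN0 : (0:ℝ) < N := by exact_mod_cast (by omega : 0 < N)
  induction n with
  | zero =>
    intro r hr
    have : r = 0 ∨ r = 1 := by rw [pow_zero] at hr; omega
    rcases this with rfl | rfl
    · simpa using h'
    · simpa using h
  | succ n ih =>
    intro r hr
    rcases hr.eq_or_lt with hr | hr
    · have : (r:ℝ) / (N:ℝ)^(n+1) = 1 := by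
        rw [hr]; push_cast; exact div_self (powN_pos hN _).ne'
      rw [this]; simpa using h
    have hNn : 0 < N^n := pow_pos (by omega) n
    set q := r / N^n with hq
    set s := r % N^n with hs
    have hqs : r = N^n * q + s := (Nat.div_add_mod r (N^n)).symm
    have hqN : q < N := by
      rw [hq, Nat.div_lt_iff_lt_mul hNn]; rw [pow_succ] at hr; linarith [mul_comm N (N^n)]
    have hsl : s ≤ N^n := (Nat.mod_lt _ hNn).le
    have hmid := ih s hsl
    have hpn := powN_pos hN n
    set t := (s:ℝ) / (N:ℝ)^n with ht
    have ht1 : t ≤ 1 := by rw [ht, div_le_one hpn]; exact_mod_cast hsl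
    have ht0 : 0 ≤ t := by positivity
    have hsum : ∀ a b c : ℝ, ∑ i ∈ Finset.range N, (if i < q then a else if i = q then b else c) =
        q * a + b + ((N:ℝ) - 1 - q) * c := fun a b c => by
      obtain ⟨K, hK⟩ : ∃ K, N = q + 1 + K := ⟨N - (q+1), by omega⟩
      rw [hK, Finset.sum_range_add, Finset.sum_range_succ]
      rw [Finset.sum_congr rfl (g := fun _ => a) fun i hi => by rw [if_pos (Finset.mem_range.1 hi)]]
      rw [Finset.sum_congr (s₁ := Finset.range K) rfl (g := fun _ => c) fun i hi => by
        rw [if_neg (by omega), if_neg (by omega)]]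
      simp
      left; ring
    have hr' : (r:ℝ) / (N:ℝ)^(n+1) = (N:ℝ)⁻¹ * (q + t) := by
      rw [hqs, ht, pow_succ]; push_cast; field_simp
    have := ach_cc hN hp hu0 (x := fun i => if i < q then x else if i = q then t * x + (1-t) * x' else x')
      (A := fun i => if i < q then A else if i = q then t * A + (1-t) * A' else A')
      (fun i => by
        by_cases h1 : i < q
        · simp only [h1, if_true]; exact h
        · by_cases h2 : i = q
          · simp only [h2, if_true, lt_irrefl, if_false]; exact hmid
          · simp only [h1, h2, if_false]; exact h')
      (fun i => by
        split_ifs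
        · exact hx
        · nlinarith
        · exact hx')
    rw [hsum, hsum] at this
    rw [hr']
    convert this using 1
    · field_simp; ring
    · field_simp; ring

lemma BM.mix {B0 B1 : ℝ} {φ0 φ1 : ℝ → ℝ} (h0 : BM B0 φ0) (h1 : BM B1 φ1) {t : ℝ}
    (ht : t ∈ Set.Icc (0:ℝ) 1) : BM (B0 + B1) (fun y => (1-t) * φ0 y + t * φ1 y) := by
  obtain ⟨ht0, ht1⟩ := ht
  refine ⟨(h0.m.const_mul _).add (h1.m.const_mul _), fun y => ?_, fun y => ?_⟩
  · have := h0.nn y; have := h1.nn y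
    have : 0 ≤ 1 - t := by linarith
    positivity
  · have a := h0.nn y; have b := h1.nn y; have c := h0.le y; have d := h1.le y
    nlinarith

lemma BM.intItv {N : ℕ} (hN : 2 ≤ N) {B : ℝ} {φ : ℝ → ℝ} (h : BM B φ) (m k : ℕ) :
    IntegrableOn φ (adicItv N m k) :=
  Measure.integrableOn_of_bounded (by rw [adicItv_vol hN]; simp) h.m.aestronglyMeasurable
    (M := B) (Eventually.of_forall fun y => by rw [Real.norm_of_nonneg (h.nn y)]; exact h.le y)

lemma ea_mix {N : ℕ} (hN : 2 ≤ N) {B0 B1 : ℝ} {φ0 φ1 : ℝ → ℝ} (h0 : BM B0 φ0) (h1 : BM B1 φ1) {t : ℝ}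
    (ht : t ∈ Set.Icc (0:ℝ) 1) (n : ℕ) (x : ℝ) :
    ea N (fun y => (1-t) * φ0 y + t * φ1 y) n x = (1-t) * ea N φ0 n x + t * ea N φ1 n x := by
  have hm := h0.mix h1 ht
  unfold ea adicAvg
  have e : ∀ {B : ℝ} {φ : ℝ → ℝ}, BM B φ → ∀ y, |φ y| = φ y := fun h y => abs_of_nonneg (h.nn y)
  simp_rw [e h0, e h1]
  rw [show (fun y => |(1-t) * φ0 y + t * φ1 y|) = fun y => (1-t) * φ0 y + t * φ1 y from
    funext fun y => e hm y]
  rw [integral_add ((h0.intItv hN _ _).const_mul _) ((h1.intItv hN _ _).const_mul _),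
    integral_const_mul, integral_const_mul]
  ring

lemma interp {N : ℕ} (hN : 2 ≤ N) {p : ℝ} (hp : 1 < p) {u f F A0 A1 T B0 B1 : ℝ} (hu : 0 ≤ u)
    {φ0 φ1 : ℝ → ℝ} (h0 : BM B0 φ0) (h1 : BM B1 φ1)
    (m0 : ∫ y, φ0 y ∂nuI = f) (m1 : ∫ y, φ1 y ∂nuI = f)
    (a0 : ∫ y, φ0 y ^ p ∂nuI = A0) (a1 : ∫ y, φ1 y ^ p ∂nuI = A1)
    (hA0 : A0 ≤ F) (hA1 : F ≤ A1)
    (t0 : ∫ y, MM N φ0 u y ^ p ∂nuI ≤ T) (t1 : ∫ y, MM N φ1 u y ^ p ∂nuI ≤ T) :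
    ∃ (φ : ℝ → ℝ) (B : ℝ), BM B φ ∧ ∫ y, φ y ∂nuI = f ∧ ∫ y, φ y ^ p ∂nuI = F ∧
      ∫ y, MM N φ u y ^ p ∂nuI ≤ T := by
  have hcont : ContinuousOn (fun t : ℝ => ∫ y, ((1-t) * φ0 y + t * φ1 y)^p ∂nuI)
      (Set.Icc (0:ℝ) 1) := by
    refine continuousOn_of_dominated (bound := fun _ => (B0+B1)^p) (fun t ht => ?_) (fun t ht => ?_)
      (integrable_const _) (Eventually.of_forall fun y => ?_)
    · exact ((h0.mix h1 ht).rpow hp).m.aestronglyMeasurable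
    · refine Eventually.of_forall fun y => ?_
      have := (h0.mix h1 ht).rpow hp
      rw [Real.norm_of_nonneg (this.nn y)]; exact this.le y
    · refine Continuous.continuousOn ?_
      exact Continuous.rpow_const (by fun_prop) fun _ => Or.inr (by linarith)
  have hiv := intermediate_value_Icc (zero_le_one (α := ℝ)) hcont
  simp only [sub_zero, one_mul, zero_mul, add_zero, sub_self, zero_add, a0, a1] at hiv
  obtain ⟨t, ht, hF⟩ := hiv ⟨hA0, hA1⟩
  have hm := h0.mix h1 ht
  refine ⟨_, _, hm, ?_, hF, ?_⟩
  · rw [integral_add (h0.int.const_mul _) (h1.int.const_mul _), integral_const_mul,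
      integral_const_mul, m0, m1]; ring
  · have M0 := h0.MM hN hu
    have M1 := h1.MM hN hu
    have hM := hm.MM hN hu
    have ht0 := ht.1
    have ht1 : 0 ≤ 1 - t := by linarith [ht.2]
    have : ∫ y, MM N (fun y => (1-t) * φ0 y + t * φ1 y) u y ^ p ∂nuI ≤
        ∫ y, ((1-t) * MM N φ0 u y ^ p + t * MM N φ1 u y ^ p) ∂nuI := by
      refine integral_mono (hM.rpow hp).int
        (((M0.rpow hp).int.const_mul _).add ((M1.rpow hp).int.const_mul _)) fun y => ?_
      have hc := (convexOn_rpow hp.le).2 (show MM N φ0 u y ∈ Set.Ici 0 from M0.nn y)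
        (show MM N φ1 u y ∈ Set.Ici 0 from M1.nn y) ht1 ht0 (by ring)
      simp only [smul_eq_mul] at hc
      refine le_trans (Real.rpow_le_rpow (hM.nn y) ?_ (by linarith)) hc
      have u0 : u ≤ MM N φ0 u y := le_max_right _ _
      have u1 : u ≤ MM N φ1 u y := le_max_right _ _
      refine max_le (ciSup_le fun n => ?_) ?_
      · rw [ea_mix hN h0 h1 ht]
        have := (le_ciSup (h0.bdd hN y) n).trans (le_max_left _ u)
        have := (le_ciSup (h1.bdd hN y) n).trans (le_max_left _ u)
        unfold MM
        gcongr
      · nlinarith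
    refine this.trans ?_
    rw [integral_add ((M0.rpow hp).int.const_mul _) ((M1.rpow hp).int.const_mul _),
      integral_const_mul, integral_const_mul]
    nlinarith

lemma exact_u {N : ℕ} (hN : 2 ≤ N) {p : ℝ} (hp : 1 < p) {u f F : ℝ} (hu0 : 0 < u) (hf : 0 < f)
    {n r : ℕ} (hr : r ≤ N^n) (hfu : f = (r / (N:ℝ)^n) * u) (hF : u^(p-1) * f ≤ F)
    {ε : ℝ} (hε : 0 < ε) :
    ∃ (φ : ℝ → ℝ) (B : ℝ), BM B φ ∧ ∫ y, φ y ∂nuI = f ∧ ∫ y, φ y ^ p ∂nuI = F ∧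
      ∫ y, MM N φ u y ^ p ∂nuI ≤ u^p + cN N p * (F - u^(p-1) * f) + cN N p * ε := by
  have hN1 : (1:ℝ) < N := by exact_mod_cast (by omega : 1 < N)
  have hC := cN_pos hN hp
  set s := (r:ℝ) / (N:ℝ)^n with hs
  have hs0 : 0 < s := by
    by_contra hc
    nlinarith
  have hs1 : s ≤ 1 := by
    rw [hs, div_le_one (powN_pos hN n)]; exact_mod_cast hr
  set a := u^p with ha
  have haF : a * s ≤ F := by
    rw [hfu] at hF
    rw [ha, ← rpow_sub_one_mul hu0.le hp]; linarith
  have haF' : a ≤ F / s := by rwa [le_div_iff₀ hs0]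
  obtain ⟨b, hb, hbA⟩ := ach_pow hN hp hu0 (F / s)
  have hba : 0 < b - a := by linarith
  set τ := (F / s - a) / (b - a) with hτ
  have hτ0 : 0 ≤ τ := div_nonneg (by linarith) hba.le
  have hτ1 : τ < 1 := by rw [hτ, div_lt_one hba]; linarith
  obtain ⟨l, hl⟩ := pow_unbounded_of_one_lt ((b - a) / ε) hN1
  have hpl := powN_pos hN l
  set k := ⌊τ * (N:ℝ)^l⌋₊ with hk
  have hkN : k < N^l := floor_lt hN ⟨hτ0, hτ1⟩ l
  have hk1 : (k:ℝ) ≤ τ * (N:ℝ)^l := Nat.floor_le (by positivity)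
  have hk2 : τ * (N:ℝ)^l < k + 1 := Nat.lt_floor_add_one _
  have hA : ∀ j : ℕ, j ≤ N^l → Ach N p u f (s * (a + (j / (N:ℝ)^l) * (b - a))) := by
    intro j hj
    have h1 := ach_mix hN hp hu0.le hbA (ach_u hN hp hu0.le) le_rfl le_rfl l j hj
    have h2 : Ach N p u u (a + (j / (N:ℝ)^l) * (b - a)) := by
      convert h1 using 1
      · ring
      · rw [← ha]; ring
    have h3 := ach_mix hN hp hu0.le h2 (ach_zero hp hu0.le) le_rfl hu0.le n r hr
    rw [← hs] at h3
    convert h3 using 1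
    · rw [hfu]; ring
    · ring
  obtain ⟨φ0, B0, hb0, m0, a0, t0⟩ := hA k hkN.le
  obtain ⟨φ1, B1, hb1, m1, a1, t1⟩ := hA (k+1) hkN
  have hFτ : F = s * (a + τ * (b - a)) := by
    rw [hτ]; field_simp; ring
  have hle1 : s * (a + (k / (N:ℝ)^l) * (b - a)) ≤ F := by
    rw [hFτ]
    have : (k:ℝ) / (N:ℝ)^l ≤ τ := by rwa [div_le_iff₀ hpl]
    gcongr
  have hle2 : F ≤ s * (a + (((k+1:ℕ):ℝ) / (N:ℝ)^l) * (b - a)) := by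
    rw [hFτ]
    have : τ ≤ ((k+1:ℕ):ℝ) / (N:ℝ)^l := by rw [le_div_iff₀ hpl]; push_cast; exact hk2.le
    gcongr
  have hle3 : s * (a + (((k+1:ℕ):ℝ) / (N:ℝ)^l) * (b - a)) ≤ F + ε := by
    have e : s * (a + (((k+1:ℕ):ℝ) / (N:ℝ)^l) * (b - a)) =
        s * (a + (k / (N:ℝ)^l) * (b - a)) + s * ((b - a) / (N:ℝ)^l) := by
      push_cast; ring
    have h4 : (b - a) / (N:ℝ)^l ≤ ε := by
      rw [div_lt_iff₀ hε] at hl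
      rw [div_le_iff₀ hpl]; linarith
    have h5 : 0 ≤ (b - a) / (N:ℝ)^l := by positivity
    rw [e]; nlinarith
  refine interp hN hp hu0.le hb0 hb1 m0 m1 a0 a1 hle1 hle2 (t0.trans ?_) (t1.trans ?_)
  · have := mul_le_mul_of_nonneg_left hle1 hC.le
    have : 0 < cN N p * ε := by positivity
    linarith
  · have := mul_le_mul_of_nonneg_left hle3 hC.le
    linarith

lemma Dp_nonneg_set {N : ℕ} {p F f κ : ℝ} : ∀ y ∈ {y : ℝ | ∃ φ : ℝ → ℝ, Measurable φ ∧
    (∀ x ∈ Set.Ico (0:ℝ) 1, 0 ≤ φ x) ∧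
    (∫ x in Set.Ico (0:ℝ) 1, φ x) = f ∧ (∫ x in Set.Ico (0:ℝ) 1, φ x ^ p) = F ∧
    y = supMeas N p κ φ}, 0 ≤ y := by
  rintro y ⟨φ, -, -, -, -, rfl⟩
  refine Real.sSup_nonneg ?_
  rintro _ ⟨E, -, -, -, rfl⟩
  refine integral_nonneg fun x => Real.rpow_nonneg (Real.sSup_nonneg ?_) _
  rintro _ ⟨m, k, -, -, rfl⟩
  have : 0 ≤ ∫ y in adicItv N m k, |φ y| := integral_nonneg fun _ => abs_nonneg _
  unfold adicAvg
  positivity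

lemma supMeas_le {N : ℕ} (hN : 2 ≤ N) {p κ u T B : ℝ} (hp : 1 < p) (hκ : κ ∈ Set.Ioc (0:ℝ) 1)
    (hu : 0 ≤ u) {φ : ℝ → ℝ} (h : BM B φ) (hT : ∫ y, MM N φ u y ^ p ∂nuI ≤ u^p + T) (hT0 : 0 ≤ T) :
    supMeas N p κ φ ≤ κ * u^p + T := by
  have hk0 := hκ.1
  refine Real.sSup_le ?_ (by positivity)
  rintro _ ⟨E, hE, hEI, hvE, rfl⟩
  have hM := (h.MM hN hu).rpow hp
  have hvE' : nuI.real E = κ := by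
    rw [measureReal_restrict_apply hE, Set.inter_eq_left.2 hEI, Measure.real, hvE,
      ENNReal.toReal_ofReal hk0.le]
  have hEr : nuI.restrict E = volume.restrict E := by
    rw [nuI, Measure.restrict_restrict hE, Set.inter_eq_left.2 hEI]
  have h1 : ∫ x in E, adicMax N φ x ^ p ≤ ∫ x in E, MM N φ u x ^ p ∂nuI := by
    rw [hEr]
    have hi : IntegrableOn (fun x => MM N φ u x ^ p) E := by
      rw [IntegrableOn, ← hEr]; exact hM.int.integrableOn
    have hnn : ∀ x ∈ E, 0 ≤ adicMax N φ x := fun x hx => by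
      rw [adicMax_eq hN φ (hEI hx)]
      exact Real.iSup_nonneg fun n => ea_nonneg _ _ _ _
    refine integral_mono_of_nonneg ?_ hi ?_
    · filter_upwards [ae_restrict_mem hE] with x hx
      exact Real.rpow_nonneg (hnn x hx) _
    · filter_upwards [ae_restrict_mem hE] with x hx
      refine Real.rpow_le_rpow (hnn x hx) ?_ (by linarith)
      rw [adicMax_eq hN φ (hEI hx)]
      exact le_max_left _ _
  have h2 := integral_add_compl hE hM.int
  have h3 : (1 - κ) * u^p ≤ ∫ x in Eᶜ, MM N φ u x ^ p ∂nuI := by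
    have : (1 - κ) = nuI.real Eᶜ := by rw [probReal_compl_eq_one_sub hE, hvE']
    rw [this, ← smul_eq_mul, ← setIntegral_const]
    refine setIntegral_mono_on (integrable_const _).integrableOn hM.int.integrableOn hE.compl
      fun x _ => ?_
    exact Real.rpow_le_rpow hu (le_max_right _ _) (by linarith)
  linarith

lemma upper {N : ℕ} (hN : 2 ≤ N) {p f F κ : ℝ} (hp : 1 < p)
    (hf : 0 < f) (hκ : κ ∈ Set.Ioc (0:ℝ) 1) {u : ℝ} (hfu : f ≤ u) (hF : u^(p-1) * f ≤ F) :
    Dp N p F f κ ≤ κ * u ^ p + cN N p * (F - u ^ (p - 1) * f) := by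
  have hu0 : 0 < u := hf.trans_le hfu
  have hC := cN_pos hN hp
  have hp1 : 0 < p - 1 := by linarith
  have hN1 : (1:ℝ) < N := by exact_mod_cast (by omega : 1 < N)
  -- special u
  have hspec : ∀ (n r : ℕ) (v : ℝ), 0 < v → r ≤ N^n → f = (r / (N:ℝ)^n) * v → v^(p-1) * f ≤ F →
      Dp N p F f κ ≤ κ * v ^ p + cN N p * (F - v ^ (p - 1) * f) := by
    intro n r v hv hr hfv hFv
    refine le_of_forall_pos_le_add fun ε hε => ?_
    obtain ⟨φ, B, hB, hm, hA, hM⟩ := exact_u hN hp hv hf hr hfv hFv (div_pos hε hC)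
    rw [mul_div_cancel₀ _ hC.ne'] at hM
    have h1 : supMeas N p κ φ ≤ κ * v^p + (cN N p * (F - v ^ (p - 1) * f) + ε) := by
      refine supMeas_le hN hp hκ hv.le hB (by linarith) ?_
      have : 0 ≤ F - v^(p-1) * f := by linarith
      positivity
    refine le_trans (csInf_le ⟨0, Dp_nonneg_set⟩ ⟨φ, hB.m, fun x _ => hB.nn x, hm, hA, rfl⟩) ?_
    linarith
  -- approximate
  set τ := f / u with hτ
  have hτ0 : 0 < τ := by positivity
  have hτ1 : τ ≤ 1 := by rw [hτ, div_le_one hu0]; exact hfu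
  set t : ℕ → ℝ := fun n => (⌈τ * (N:ℝ)^n⌉₊ : ℝ) / (N:ℝ)^n with ht
  have hpn := fun n => powN_pos hN n
  have htτ : ∀ n, τ ≤ t n := fun n => by
    rw [ht]; dsimp only; rw [le_div_iff₀ (hpn n)]; exact Nat.le_ceil _
  have htlim : Tendsto t atTop (nhds τ) := by
    have hup : ∀ n, t n ≤ τ + ((N:ℝ)⁻¹)^n := fun n => by
      rw [ht]; dsimp only
      rw [div_le_iff₀ (hpn n), inv_pow, add_mul, inv_mul_cancel₀ (hpn n).ne']
      exact (Nat.ceil_lt_add_one (by have := hpn n; positivity)).le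
    have h0 : Tendsto (fun n : ℕ => τ + ((N:ℝ)⁻¹)^n) atTop (nhds (τ + 0)) :=
      (tendsto_pow_atTop_nhds_zero_of_lt_one (by positivity)
        (inv_lt_one_of_one_lt₀ hN1)).const_add _
    rw [add_zero] at h0
    exact tendsto_of_tendsto_of_tendsto_of_le_of_le tendsto_const_nhds h0 htτ hup
  have hvlim : Tendsto (fun n => f / t n) atTop (nhds u) := by
    have : u = f / τ := by rw [hτ]; field_simp
    rw [this]
    exact tendsto_const_nhds.div htlim hτ0.ne'
  have hG : Tendsto (fun n => κ * (f / t n) ^ p + cN N p * (F - (f / t n) ^ (p - 1) * f)) atTop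
      (nhds (κ * u ^ p + cN N p * (F - u ^ (p - 1) * f))) := by
    have a1 := hvlim.rpow_const (p := p) (Or.inr (by linarith))
    have a2 := hvlim.rpow_const (p := p-1) (Or.inr hp1.le)
    exact (a1.const_mul κ).add (((a2.mul_const f).const_sub F).const_mul _)
  refine ge_of_tendsto hG (Eventually.of_forall fun n => ?_)
  have htn : 0 < t n := hτ0.trans_le (htτ n)
  refine hspec n ⌈τ * (N:ℝ)^n⌉₊ (f / t n) (by positivity) ?_ ?_ ?_
  · rw [Nat.ceil_le]; push_cast
    have := hpn n
    nlinarith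
  · show f = t n * (f / t n)
    field_simp
  · refine le_trans ?_ hF
    have : f / t n ≤ u := by
      rw [div_le_iff₀ htn]
      have := htτ n
      rw [hτ, div_le_iff₀ hu0] at this
      linarith
    have : 0 ≤ f / t n := by positivity
    gcongr
theorem stmt1 (N : ℕ) (hN : 2 ≤ N) (p f F κ : ℝ) (hp : 1 < p)
    (hf : 0 < f) (hF : 0 < F) (hfF : f ^ p ≤ F) (hκ : κ ∈ Set.Ioc (0:ℝ) 1) :
    Dp N p F f κ =
      sInf ((fun u : ℝ => κ * u ^ p +
          (((N : ℝ) ^ p - 1) / ((N : ℝ) ^ p - N)) * (F - u ^ (p - 1) * f)) ''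
        Set.Icc f (min ((F / f) ^ (1 / (p - 1))) (f / κ))) := by
  have hp1 : 0 < p - 1 := by linarith
  have hκ0 := hκ.1
  have hfF' : f ≤ (F / f) ^ (1 / (p - 1)) := by
    rw [one_div, Real.le_rpow_inv_iff_of_pos hf.le (by positivity) hp1, le_div_iff₀ hf,
      rpow_sub_one_mul hf.le hp]
    exact hfF
  have hmem : ∀ u, f ≤ u → u ≤ (F / f) ^ (1 / (p - 1)) → u^(p-1) * f ≤ F := by
    intro u hu hu'
    rwa [one_div, Real.le_rpow_inv_iff_of_pos (hf.le.trans hu) (by positivity) hp1,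
      le_div_iff₀ hf] at hu'
  have hfκ : f ≤ f / κ := by rw [le_div_iff₀ hκ0]; nlinarith [hκ.2]
  have hup : ∀ u ∈ Set.Icc f (min ((F / f) ^ (1 / (p - 1))) (f / κ)),
      Dp N p F f κ ≤ κ * u ^ p + cN N p * (F - u ^ (p - 1) * f) := fun u hu =>
    upper hN hp hf hκ hu.1 (hmem u hu.1 (hu.2.trans (min_le_left _ _)))
  apply le_antisymm
  · refine le_csInf ⟨_, f, ⟨le_rfl, le_min hfF' hfκ⟩, rfl⟩ ?_
    rintro _ ⟨u, hu, rfl⟩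
    exact hup u hu
  · refine le_csInf ?_ ?_
    · obtain ⟨φ, B, hB, hm, hA, -⟩ := exact_u hN hp hf hf (n := 0) (r := 1) (by simp) (by simp)
        (hmem f le_rfl hfF') one_pos
      exact ⟨_, φ, hB.m, fun x _ => hB.nn x, hm, hA, rfl⟩
    · rintro _ ⟨φ, -, h0, h1, h2, rfl⟩
      obtain ⟨u, hu, hle⟩ := lower hN hp hf hF hfF hκ h0 h1 h2
      refine le_trans (csInf_le ⟨Dp N p F f κ, ?_⟩ ⟨u, hu, rfl⟩) hle
      rintro _ ⟨v, hv, rfl⟩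
      exact hup v hv
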